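/- Let 0<c₁<⋯<c_m be non-integer reals. There exists a constant C>0 depending only on c₁,…,c_m, m with the following property: for every real N≥1, every δ∈(0,1], and all ξ₁,…,ξ_m∈ℝ, if δ ≤ | (1/N) ∑_{n=1}^{N} 1_{n>N/2} e(ξ₁⌊n^{c₁}⌋+⋯+ξ_m⌊n^{c_m}⌋) |, then either N ≤ C δ^{−C}, or ‖ξ_i‖_𝕋 ≤ C δ^{−C} N^{−c_i} for every i∈{1,…,m}. -/

import Mathlib

/-!
The proof splits into an inverse theorem for the sums without integer parts and a Fourier-analytic
removal of the integer parts.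

**Smooth phases** (`smooth_inverse`). Put `f(x) = ∑ θ_i x^{c_i}` and `M = ∑ |θ_i| N^{c_i}`
(`phaseSize`). On `[N/2, 3N]` one has `|f^{(k)}| ≪ M / N^k`. Conversely, since the `c_i` are distinct
and not integers, a Vandermonde argument shows that at each point one of `m` consecutive derivatives
is `≫ M / N^k` (`phase_lower`), and then it remains so on a block of length `N / L`, `L` a constant.
If the exponential sum is `≥ N / A` (with `|θ_i| ≤ A`), one such block still carries a large sum.
Applying van der Corput differencing `j` times, with shifts which are multiples of an integer `q` up
to a factor `A^{O(1)}` (`iterated_van_der_corput`), leaves a sum with a phase whose first difference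
has size between `q^j M / N^{j+1}` and `A^{O(1)}` times this. Here `j + 1` is the order of the large
derivative, larger than all `c_i`. When `q` is the largest integer for which these first differences
stay below `1/2`, the Kusmin–Landau estimate (`kusmin_landau`, a summation by parts) gives
`M ≤ A^{O(1)}` or `N ≤ A^{O(1)}`.

**Integer parts** (`floor_removal`). Modulo integers `ξ_i` may be replaced by `ζ_i ∈ [-1/2, 1/2]`,
and `e(ζ⌊x⌋) = e(ζx) e(-ζ{x})`. Averaging over the grid `ℤ/Q`, `Q = p³`, against a Fejér kernel
replaces `e(-ζ{x})` by a trigonometric polynomial of degree `< Q`, with error `O(1/p)` unless `x` is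
within `1/p` of an integer (`fejerApprox_close`). The same kernel shows that few of the `n^{c_i}` are
that close to an integer (`card_near_le`), the required Weyl sums being small by the first part.
With `p ≍ m/δ`, expanding the polynomials yields integers `k_i` with `|k_i| < Q` for which the sum
with phase `∑ (ζ_i + k_i) n^{c_i}` is `≫ δ^{O(1)} N`. The first part bounds `|ζ_i + k_i| N^{c_i}`,
and `‖ξ_i‖_𝕋 ≤ |ζ_i + k_i|`.
-/

open MeasureTheory Filter Finset
open scoped ENNReal NNReal

noncomputable section

/-- `e(x) = e^{2πix}`. -/
def eC (x : ℝ) : ℂ := Complex.exp (2 * Real.pi * Complex.I * x)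

/-- The symbol of the upper-half discrete averaging operator:
`m_{N;ℤ}(ξ) = (1/N) ∑_{n=1}^{N} 1_{n>N/2} e(ξ₁⌊n^{c₁}⌋ + ⋯ + ξ_m⌊n^{c_m}⌋)`. -/
def mZ (m : ℕ) (c : Fin m → ℝ) (N : ℕ) (ξ : Fin m → ℝ) : ℂ :=
  (N : ℂ)⁻¹ * ∑ n ∈ Finset.Icc 1 N,
    if N < 2 * n then eC (∑ i, ξ i * (⌊(n : ℝ) ^ c i⌋ : ℝ)) else 0

/-- `‖ξ‖_𝕋`, the distance from `ξ` to the nearest integer. -/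
def distT (ξ : ℝ) : ℝ := |ξ - round ξ|

/-! ### The character `e` -/

lemma eC_eq (x : ℝ) : eC x = Complex.exp (Complex.I * ((2 * Real.pi * x : ℝ) : ℂ)) := by
  unfold eC; congr 1; push_cast; ring

lemma norm_eC (x : ℝ) : ‖eC x‖ = 1 := by
  rw [eC_eq, Complex.norm_exp_I_mul_ofReal]

lemma eC_add (x y : ℝ) : eC (x + y) = eC x * eC y := by
  unfold eC; rw [← Complex.exp_add]; congr 1; push_cast; ring

lemma eC_zero : eC 0 = 1 := by simp [eC]

lemma eC_ne_zero (x : ℝ) : eC x ≠ 0 := by unfold eC; exact Complex.exp_ne_zero _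

lemma eC_int (k : ℤ) : eC k = 1 := by
  unfold eC; rw [Complex.exp_eq_one_iff]; exact ⟨k, by push_cast; ring⟩

lemma conj_eC (x : ℝ) : (starRingEnd ℂ) (eC x) = eC (-x) := by
  unfold eC; rw [← Complex.exp_conj]; congr 1
  simp only [map_mul, map_ofNat, Complex.conj_ofReal, Complex.conj_I]; push_cast; ring

lemma eC_sum {ι : Type*} (s : Finset ι) (f : ι → ℝ) : eC (∑ i ∈ s, f i) = ∏ i ∈ s, eC (f i) := by
  classical
  induction s using Finset.induction_on with
  | empty => simp [eC_zero]
  | insert a s ha ih => rw [sum_insert ha, prod_insert ha, eC_add, ih]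

lemma eC_nat_mul (r : ℕ) (x : ℝ) : eC (r * x) = eC x ^ r := by
  unfold eC; rw [← Complex.exp_nat_mul]; congr 1; push_cast; ring

lemma norm_eC_sub_one_le (y : ℝ) : ‖eC y - 1‖ ≤ 2 * Real.pi * |y| := by
  rw [eC_eq]
  refine (Real.norm_exp_I_mul_ofReal_sub_one_le).trans ?_
  rw [Real.norm_eq_abs, abs_mul, abs_of_pos (by positivity)]

lemma norm_eC_sub_eC_le (x y : ℝ) : ‖eC x - eC y‖ ≤ 2 * Real.pi * |x - y| := by
  have h : eC x - eC y = eC y * (eC (x - y) - 1) := by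
    rw [mul_sub, ← eC_add]; simp
  rw [h, norm_mul, norm_eC, one_mul]
  exact norm_eC_sub_one_le _

lemma le_norm_eC_sub_one {y : ℝ} (hy : |y| ≤ 1 / 2) : 4 * |y| ≤ ‖eC y - 1‖ := by
  rw [eC_eq, Complex.norm_exp_I_mul_ofReal_sub_one, Real.norm_eq_abs, abs_mul]
  have h1 : |Real.sin (2 * Real.pi * y / 2)| = Real.sin (Real.pi * |y|) := by
    rw [show 2 * Real.pi * y / 2 = Real.pi * y by ring]
    have hp := Real.pi_pos
    have h0 : 0 ≤ Real.sin (Real.pi * |y|) := by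
      apply Real.sin_nonneg_of_nonneg_of_le_pi (by positivity)
      nlinarith
    rcases abs_choice y with h | h
    · rw [h] at h0 ⊢; rw [abs_of_nonneg h0]
    · rw [h, mul_neg, Real.sin_neg] at h0 ⊢; rw [abs_of_nonpos (by linarith)]
  rw [h1]
  have := Real.mul_le_sin (x := Real.pi * |y|) (by positivity) (by nlinarith [Real.pi_pos])
  rw [show 2 / Real.pi * (Real.pi * |y|) = 2 * |y| by field_simp] at this
  norm_num
  linarith

/-- The lower bound for `|e(y) - 1|` in terms of the distance to the nearest integer. -/
lemma le_norm_eC_sub_one' (y : ℝ) : 4 * distT y ≤ ‖eC y - 1‖ := by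
  have h : eC y = eC (y - round y) := by
    conv_lhs => rw [show y = (y - round y) + ((round y : ℤ) : ℝ) by ring, eC_add, eC_int, mul_one]
  rw [h]
  exact le_norm_eC_sub_one (abs_sub_round y)

/-! ### A Kusmin–Landau estimate without monotonicity -/

/-- If the increments `d n = g (n+1) - g n` have size in `[lam, 1/2]` and vary slowly, the
exponential sum over `g` is controlled by summation by parts against `1 / (e(d n) - 1)`. -/
lemma kusmin_landau (g : ℕ → ℝ) (W : ℕ) {lam mu : ℝ} (hl : 0 < lam)
    (h1 : ∀ n ≤ W, lam ≤ |g (n + 1) - g n|) (h2 : ∀ n ≤ W, |g (n + 1) - g n| ≤ 1 / 2)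
    (h3 : ∀ n < W, |(g (n + 2) - g (n + 1)) - (g (n + 1) - g n)| ≤ mu) :
    ‖∑ n ∈ range W, eC (g n)‖ ≤ 1 / lam + W * mu / lam ^ 2 := by
  set w : ℕ → ℂ := fun n => eC (g (n + 1) - g n) - 1 with hw
  have hwn : ∀ n ≤ W, 4 * lam ≤ ‖w n‖ := fun n hn =>
    (by linarith [h1 n hn] : 4 * lam ≤ 4 * |g (n + 1) - g n|).trans (le_norm_eC_sub_one (h2 n hn))
  have hw0 : ∀ n ≤ W, w n ≠ 0 := fun n hn h => by
    have := hwn n hn; rw [h, norm_zero] at this; linarith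
  have hstep : ∀ n, eC (g (n + 1)) = eC (g n) * (w n + 1) := fun n => by
    simp only [hw, sub_add_cancel, ← eC_add]; congr 1; ring
  have hterm : ∀ n ∈ range W, eC (g n) =
      (eC (g (n + 1)) / w (n + 1) - eC (g n) / w n)
        + (w (n + 1) - w n) / (w (n + 1) * w n) * eC (g (n + 1)) := by
    intro n hn
    have hn := mem_range.1 hn
    have a := hw0 n hn.le
    have b := hw0 (n + 1) hn
    rw [hstep n]
    field_simp
    ring
  rw [sum_congr rfl hterm, sum_add_distrib, Finset.sum_range_sub (fun n => eC (g n) / w n)]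
  have hb : ∀ n ≤ W, ‖eC (g n) / w n‖ ≤ 1 / (4 * lam) := fun n hn => by
    rw [norm_div, norm_eC]; exact one_div_le_one_div_of_le (by positivity) (hwn n hn)
  have hd : ∀ n ∈ range W, ‖(w (n + 1) - w n) / (w (n + 1) * w n) * eC (g (n + 1))‖
      ≤ mu / lam ^ 2 := by
    intro n hn
    have hn := mem_range.1 hn
    have hnum : ‖w (n + 1) - w n‖ ≤ 2 * Real.pi * mu := by
      have : w (n + 1) - w n = eC (g (n + 2) - g (n + 1)) - eC (g (n + 1) - g n) := by
        simp [hw]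
      rw [this]
      refine (norm_eC_sub_eC_le _ _).trans ?_
      have := h3 n hn
      have := Real.pi_pos
      gcongr
    have hden : 16 * lam ^ 2 ≤ ‖w (n + 1)‖ * ‖w n‖ := by
      have := mul_le_mul (hwn (n + 1) hn) (hwn n hn.le) (by positivity) (norm_nonneg _)
      nlinarith
    have hmu : 0 ≤ mu := (abs_nonneg _).trans (h3 n hn)
    rw [norm_mul, norm_eC, mul_one, norm_div, norm_mul]
    calc ‖w (n + 1) - w n‖ / (‖w (n + 1)‖ * ‖w n‖) ≤ (2 * Real.pi * mu) / (16 * lam ^ 2) := by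
          gcongr
      _ ≤ (16 * mu) / (16 * lam ^ 2) := by gcongr; linarith [Real.pi_lt_four]
      _ = mu / lam ^ 2 := by field_simp
  refine (norm_add_le _ _).trans (add_le_add ?_ ?_)
  · refine (norm_sub_le _ _).trans ((add_le_add (hb W le_rfl) (hb 0 (Nat.zero_le _))).trans ?_)
    rw [← two_mul, mul_one_div, div_le_div_iff₀ (by positivity) hl]
    linarith
  · refine (norm_sum_le_of_le _ hd).trans ?_
    simp [mul_div_assoc]

/-! ### Weyl–van der Corput differencing -/

/-- One differencing step, with shifts in the progression `q, 2q, …, (H - 1) q` for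
`H = 4 A ^ 2`. -/
lemma van_der_corput (a : ℕ → ℂ) (ha : ∀ n, ‖a n‖ = 1) (W N A q : ℕ) (hA : 1 ≤ A)
    (hN : 1 ≤ N) (hWN : W ≤ N) (hq : q * (4 * A ^ 2) ≤ N)
    (hS : (N : ℝ) / A ≤ ‖∑ n ∈ range W, a n‖) :
    ∃ i, 1 ≤ i ∧ i < 4 * A ^ 2 ∧ (N : ℝ) / (4 * A ^ 2 : ℕ) ≤
      ‖∑ n ∈ range (W - q * i), a (n + q * i) * (starRingEnd ℂ) (a n)‖ := by
  by_contra! hcon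
  set H := 4 * A ^ 2 with hH
  have hA' : (1 : ℝ) ≤ A := by exact_mod_cast hA
  have hN' : (1 : ℝ) ≤ N := by exact_mod_cast hN
  have hHr : (H : ℝ) = 4 * (A : ℝ) ^ 2 := by rw [hH]; push_cast; ring
  have hHpos : (0 : ℝ) < H := by rw [hHr]; positivity
  -- `b` is `a` restricted to `[0, W)`, extended by zero; `T` contains all relevant shifts.
  set b : ℤ → ℂ := fun n => if 0 ≤ n ∧ n < W then a n.toNat else 0 with hb
  set T : Finset ℤ := Finset.Ico (-(q * H : ℕ) : ℤ) W with hT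
  have hbz : ∀ n : ℤ, ¬ (0 ≤ n ∧ n < W) → b n = 0 := fun n hn => by simp only [hb, if_neg hn]
  have hbnat : ∀ n : ℕ, n < W → b n = a n := fun n hn => by
    simp only [hb]; rw [if_pos ⟨by positivity, by exact_mod_cast hn⟩]; simp
  -- shift invariance
  have hshift : ∀ (G : ℤ → ℂ) (s : ℕ), s ≤ q * H → (∀ n : ℤ, ¬ (0 ≤ n ∧ n < W) → G n = 0) →
      ∑ n ∈ T, G (n + s) = ∑ n ∈ range W, G n := by
    intro G s hs hG
    have e1 : ∑ n ∈ T, G (n + s) = ∑ n ∈ Finset.Ico (-(q * H : ℕ) + s : ℤ) (W + s), G n := by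
      rw [hT, ← Finset.map_add_right_Ico, Finset.sum_map]; rfl
    rw [e1]
    symm
    have e2 : ∑ n ∈ range W, G n = ∑ n ∈ (range W).map Nat.castEmbedding, G n := by simp
    rw [e2]
    apply Finset.sum_subset
    · intro n hn
      simp only [Finset.mem_map, mem_range, Nat.castEmbedding_apply] at hn
      obtain ⟨k, hk, rfl⟩ := hn
      simp only [Finset.mem_Ico]
      omega
    · intro n _ hn
      apply hG
      intro h
      apply hn
      simp only [Finset.mem_map, mem_range, Nat.castEmbedding_apply]
      exact ⟨n.toNat, by omega, by omega⟩
  have hle : ∀ j ∈ range H, q * j ≤ q * H := fun j hj =>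
    Nat.mul_le_mul_left _ (mem_range.1 hj).le
  have hlin : (H : ℂ) * ∑ n ∈ range W, a n = ∑ n ∈ T, ∑ j ∈ range H, b (n + (q * j : ℕ)) := by
    rw [Finset.sum_comm, Finset.sum_congr rfl fun j hj => hshift b (q * j) (hle j hj) hbz]
    rw [Finset.sum_congr rfl fun j _ =>
      Finset.sum_congr rfl fun n hn => hbnat n (mem_range.1 hn)]
    simp
  have hcorr : ∀ j j' : ℕ, j' < j → j < H →
      ‖∑ n ∈ T, b (n + (q * j : ℕ)) * (starRingEnd ℂ) (b (n + (q * j' : ℕ)))‖ ≤ N / H := by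
    intro j j' hjj hj
    have e1 : ∑ n ∈ T, b (n + (q * j : ℕ)) * (starRingEnd ℂ) (b (n + (q * j' : ℕ)))
        = ∑ n ∈ range W, b ((n : ℤ) + (q * (j - j') : ℕ)) * (starRingEnd ℂ) (b n) := by
      rw [← hshift (fun n => b (n + (q * (j - j') : ℕ)) * (starRingEnd ℂ) (b n)) (q * j')
        (hle j' (mem_range.2 (hjj.trans hj))) (fun n hn => by simp [hbz n hn])]
      refine Finset.sum_congr rfl fun n _ => ?_
      congr 2
      have : q * j = q * j' + q * (j - j') := by rw [← mul_add]; congr 1; omega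
      rw [this]; push_cast; ring
    have e2 : ∑ n ∈ range W, b ((n : ℤ) + (q * (j - j') : ℕ)) * (starRingEnd ℂ) (b n)
        = ∑ n ∈ range (W - q * (j - j')),
          a (n + q * (j - j')) * (starRingEnd ℂ) (a n) := by
      rw [← Finset.sum_subset (s₁ := range (W - q * (j - j')))]
      · refine Finset.sum_congr rfl fun n hn => ?_
        have := mem_range.1 hn
        rw [hbnat n (by omega)]
        congr 1
        rw [← hbnat (n + q * (j - j')) (by omega)]; push_cast; rfl
      · exact Finset.range_subset_range.2 (Nat.sub_le _ _)
      · intro n _ hn2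
        have h2 : ¬ n < W - q * (j - j') := by simpa using hn2
        rw [hbz _ (by omega), zero_mul]
    rw [e1, e2]
    exact (hcon (j - j') (by omega) (by omega)).le
  have hdiag : ∀ j ∈ range H,
      ‖∑ n ∈ T, b (n + (q * j : ℕ)) * (starRingEnd ℂ) (b (n + (q * j : ℕ)))‖ ≤ N := by
    intro j hj
    rw [hshift (fun n => b n * (starRingEnd ℂ) (b n)) (q * j) (hle j hj)
      (fun n hn => by simp [hbz n hn])]
    refine (norm_sum_le_of_le (range W) (f := fun n : ℕ => b n * (starRingEnd ℂ) (b n))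
      (n := fun _ => 1) ?_).trans ?_
    · intro n hn; rw [hbnat n (mem_range.1 hn)]; simp [ha]
    · simpa using hWN
  have hsq : ∑ n ∈ T, ‖∑ j ∈ range H, b (n + (q * j : ℕ))‖ ^ 2 ≤ H * (N - N / H) + H ^ 2 * (N / H) := by
    have e1 : ((∑ n ∈ T, ‖∑ j ∈ range H, b (n + (q * j : ℕ))‖ ^ 2 : ℝ) : ℂ)
        = ∑ j ∈ range H, ∑ j' ∈ range H,
          ∑ n ∈ T, b (n + (q * j : ℕ)) * (starRingEnd ℂ) (b (n + (q * j' : ℕ))) := by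
      push_cast
      have : ∀ n : ℤ, ((‖∑ j ∈ range H, b (n + (q * j : ℕ))‖ : ℝ) : ℂ) ^ 2 =
          ∑ j ∈ range H, ∑ j' ∈ range H,
            b (n + (q * j : ℕ)) * (starRingEnd ℂ) (b (n + (q * j' : ℕ))) := by
        intro n
        rw [← Complex.mul_conj', map_sum, Finset.sum_mul_sum]
      push_cast at this
      rw [Finset.sum_congr rfl fun n _ => this n, Finset.sum_comm]
      refine Finset.sum_congr rfl fun j _ => ?_
      rw [Finset.sum_comm]
    have e2 : ‖((∑ n ∈ T, ‖∑ j ∈ range H, b (n + (q * j : ℕ))‖ ^ 2 : ℝ) : ℂ)‖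
        = ∑ n ∈ T, ‖∑ j ∈ range H, b (n + (q * j : ℕ))‖ ^ 2 := by
      rw [Complex.norm_real, Real.norm_of_nonneg (by positivity)]
    rw [← e2, e1]
    have e3 : ∀ j ∈ range H, ∀ j' ∈ range H,
        ‖∑ n ∈ T, b (n + (q * j : ℕ)) * (starRingEnd ℂ) (b (n + (q * j' : ℕ)))‖
          ≤ (if j = j' then (N : ℝ) - N / H else 0) + N / H := by
      intro j hj j' hj'
      rcases lt_trichotomy j j' with h | h | h
      · rw [if_neg h.ne, zero_add]
        have := hcorr j' j h (mem_range.1 hj')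
        rw [← RCLike.norm_conj, map_sum]
        refine le_of_eq_of_le ?_ this
        congr 1
        refine Finset.sum_congr rfl fun n _ => ?_
        simp [mul_comm]
      · subst h
        rw [if_pos rfl]
        have := hdiag j hj
        linarith
      · rw [if_neg h.ne', zero_add]
        exact hcorr j j' h (mem_range.1 hj)
    refine (norm_sum_le_of_le _ fun j hj => norm_sum_le_of_le _ fun j' hj' => e3 j hj j' hj').trans ?_
    simp only [sum_add_distrib, Finset.sum_ite_eq, sum_const, card_range, nsmul_eq_mul]
    rw [Finset.sum_ite_mem]
    simp only [inter_self, sum_const, card_range, nsmul_eq_mul]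
    apply le_of_eq; ring
  have hCS : (H * ‖∑ n ∈ range W, a n‖) ^ 2 ≤ (2 * N) * (H * (N - N / H) + H ^ 2 * (N / H)) := by
    have e0 : H * ‖∑ n ∈ range W, a n‖ ≤ ∑ n ∈ T, ‖∑ j ∈ range H, b (n + (q * j : ℕ))‖ := by
      have : (H : ℝ) * ‖∑ n ∈ range W, a n‖ = ‖(H : ℂ) * ∑ n ∈ range W, a n‖ := by simp
      rw [this, hlin]
      exact norm_sum_le _ _
    have hcard : (T.card : ℝ) ≤ 2 * N := by
      have : T.card ≤ 2 * N := by rw [hT, Int.card_Ico]; omega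
      exact_mod_cast this
    calc (H * ‖∑ n ∈ range W, a n‖) ^ 2
        ≤ (∑ n ∈ T, ‖∑ j ∈ range H, b (n + (q * j : ℕ))‖) ^ 2 := by gcongr
      _ ≤ T.card * ∑ n ∈ T, ‖∑ j ∈ range H, b (n + (q * j : ℕ))‖ ^ 2 :=
          sq_sum_le_card_mul_sum_sq
      _ ≤ (2 * N) * (H * (N - N / H) + H ^ 2 * (N / H)) := by gcongr
  have hlow : (H * (N / A : ℝ)) ^ 2 ≤ (H * ‖∑ n ∈ range W, a n‖) ^ 2 := by gcongr
  have e4 : (H * (N / A : ℝ)) ^ 2 = 4 * H * N ^ 2 := by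
    rw [hHr]; field_simp
  have e5 : (2 * N) * (H * (N - (N : ℝ) / H) + H ^ 2 * ((N : ℝ) / H)) = 4 * H * N ^ 2 - 2 * N ^ 2 := by
    field_simp; ring
  nlinarith

/-! ### Iterated differences -/

/-- `iterDiff [h₁, …, h_j] f = Δ_{h₁} ⋯ Δ_{h_j} f`, where `Δ_h f (x) = f (x + h) - f x`. -/
def iterDiff : List ℕ → (ℝ → ℝ) → ℝ → ℝ
  | [], f, x => f x
  | h :: l, f, x => iterDiff l f (x + h) - iterDiff l f x

lemma iterDiff_hasDerivAt {F : ℕ → ℝ → ℝ}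
    (hF : ∀ k x, 0 < x → HasDerivAt (F k) (F (k + 1) x) x) (l : List ℕ) (k : ℕ) :
    ∀ x, 0 < x → HasDerivAt (iterDiff l (F k)) (iterDiff l (F (k + 1)) x) x := by
  induction l with
  | nil => exact hF k
  | cons h l ih =>
    intro x hx
    exact HasDerivAt.sub ((ih (x + h) (by positivity)).comp_add_const x h) (ih x hx)

/-- The mean value theorem for iterated differences. -/
lemma iterDiff_mvt {F : ℕ → ℝ → ℝ}
    (hF : ∀ k x, 0 < x → HasDerivAt (F k) (F (k + 1) x) x) (l : List ℕ) :
    ∀ (k : ℕ) (x : ℝ), 0 < x → ∃ z : ℝ, x ≤ z ∧ z ≤ x + l.sum ∧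
      iterDiff l (F k) x = l.prod * F (k + l.length) z := by
  induction l with
  | nil => intro k x _; exact ⟨x, le_rfl, by simp, by simp [iterDiff]⟩
  | cons h l ih =>
    intro k x hx
    rcases Nat.eq_zero_or_pos h with rfl | hh
    · exact ⟨x, le_rfl, le_add_of_nonneg_right (Nat.cast_nonneg _), by simp [iterDiff]⟩
    have hh' : (0 : ℝ) < h := by exact_mod_cast hh
    obtain ⟨y, hy, hy'⟩ := exists_hasDerivAt_eq_slope (iterDiff l (F k)) (iterDiff l (F (k + 1)))
      (show x < x + (h : ℝ) by linarith)
      (fun y hy => (iterDiff_hasDerivAt hF l k y (by linarith [hy.1])).continuousAt.continuousWithinAt)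
      (fun y hy => iterDiff_hasDerivAt hF l k y (by linarith [hy.1]))
    obtain ⟨z, hz1, hz2, hz3⟩ := ih (k + 1) y (by linarith [hy.1])
    refine ⟨z, by linarith [hy.1], ?_, ?_⟩
    · have := hy.2
      simp only [List.sum_cons, Nat.cast_add]
      linarith
    · have e : iterDiff (h :: l) (F k) x = h * iterDiff l (F (k + 1)) y := by
        rw [hy', add_sub_cancel_left, mul_div_cancel₀ _ hh'.ne', iterDiff]
      rw [e, hz3, List.prod_cons, List.length_cons, show k + (l.length + 1) = k + 1 + l.length by ring]
      push_cast; ring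

/-- The loss in the lower bound after `j` differencing steps. -/
def lossSeq (A : ℕ) : ℕ → ℕ
  | 0 => A
  | j + 1 => 4 * lossSeq A j ^ 2

lemma lossSeq_pos {A : ℕ} (hA : 1 ≤ A) (j : ℕ) : 1 ≤ lossSeq A j := by
  induction j with
  | zero => exact hA
  | succ j ih => simp only [lossSeq]; nlinarith

lemma lossSeq_mono {A : ℕ} (hA : 1 ≤ A) : Monotone (lossSeq A) := by
  apply monotone_nat_of_le_succ
  intro j
  have := lossSeq_pos hA j
  simp only [lossSeq]; nlinarith

lemma lossSeq_le_pow (j : ℕ) : ∃ e : ℕ, ∀ A : ℕ, 2 ≤ A → lossSeq A j ≤ A ^ e := by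
  induction j with
  | zero => exact ⟨1, fun A _ => by simp [lossSeq]⟩
  | succ j ih =>
    obtain ⟨e, he⟩ := ih
    refine ⟨2 + e * 2, fun A hA => ?_⟩
    rw [pow_add, pow_mul, lossSeq]
    exact Nat.mul_le_mul (by nlinarith) (Nat.pow_le_pow_left (he A hA) 2)

/-- After `j` differencing steps with shifts between `q` and `q * lossSeq A j`, the differenced sum
is still large. -/
lemma iterated_van_der_corput (f : ℝ → ℝ) (u W N A q : ℕ) (hA : 1 ≤ A) (hN : 1 ≤ N) (hWN : W ≤ N)
    (hS : (N : ℝ) / A ≤ ‖∑ n ∈ range W, eC (f ((u + n : ℕ) : ℝ))‖) (j : ℕ)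
    (hq : q * lossSeq A j ≤ N) :
    ∃ l : List ℕ, l.length = j ∧ (∀ h ∈ l, q ≤ h ∧ h ≤ q * lossSeq A j) ∧
      (N : ℝ) / lossSeq A j ≤
        ‖∑ n ∈ range (W - l.sum), eC (iterDiff l f ((u + n : ℕ) : ℝ))‖ := by
  induction j with
  | zero => exact ⟨[], rfl, by simp, by simpa [lossSeq, iterDiff] using hS⟩
  | succ j ih =>
    have hmono := lossSeq_mono hA (Nat.le_succ j)
    obtain ⟨l, hl1, hl2, hl3⟩ := ih ((Nat.mul_le_mul_left q hmono).trans hq)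
    obtain ⟨i, hi1, hi2, hi3⟩ := van_der_corput (fun n => eC (iterDiff l f ((u + n : ℕ) : ℝ)))
      (fun n => norm_eC _) (W - l.sum) N (lossSeq A j) q (lossSeq_pos hA j) hN
      ((Nat.sub_le _ _).trans hWN) hq hl3
    refine ⟨q * i :: l, by simp [hl1], ?_, ?_⟩
    · intro h hh
      rcases List.mem_cons.1 hh with rfl | hh
      · exact ⟨Nat.le_mul_of_pos_right _ hi1, Nat.mul_le_mul_left _ hi2.le⟩
      · exact ⟨(hl2 h hh).1, (hl2 h hh).2.trans (Nat.mul_le_mul_left q hmono)⟩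
    · refine hi3.trans (le_of_eq ?_)
      rw [List.sum_cons, add_comm (q * i), ← Nat.sub_sub]
      congr 1
      refine Finset.sum_congr rfl fun n _ => ?_
      rw [conj_eC, ← eC_add]
      simp only [iterDiff]
      congr 1
      push_cast
      rw [show (u : ℝ) + (n + q * i) = u + n + q * i by ring]
      ring

/-- The combination of `j` differencing steps with the Kusmin–Landau estimate: a large
exponential sum with phase `F 0` forces a relation between `q`, `N` and the size of the derivative
of order `j + 1`. -/
lemma derivative_test {F : ℕ → ℝ → ℝ} (hF : ∀ k x, 0 < x → HasDerivAt (F k) (F (k + 1) x) x)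
    (u W N A q j : ℕ) (hu : 1 ≤ u) (hA : 1 ≤ A) (hN : 1 ≤ N) (hWN : W ≤ N) (hq0 : 1 ≤ q)
    (hq : q * lossSeq A j ≤ N) {lam Lam mu : ℝ} (hlam : 0 < lam)
    (h1 : ∀ x : ℝ, u ≤ x → x ≤ u + W + 1 → lam ≤ |F (j + 1) x|)
    (h2 : ∀ x : ℝ, u ≤ x → x ≤ u + W + 1 → |F (j + 1) x| ≤ Lam)
    (h3 : ∀ x : ℝ, u ≤ x → x ≤ u + W + 1 → |F (j + 2) x| ≤ mu)
    (hLam : ((q * lossSeq A j : ℕ) : ℝ) ^ j * Lam ≤ 1 / 2)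
    (hS : (N : ℝ) / A ≤ ‖∑ n ∈ range W, eC (F 0 ((u + n : ℕ) : ℝ))‖) :
    (N : ℝ) / lossSeq A j ≤ (1 / lam + W * mu / lam ^ 2) / (q : ℝ) ^ j := by
  obtain ⟨l, hl1, hl2, hl3⟩ := iterated_van_der_corput (F 0) u W N A q hA hN hWN hS j hq
  have hu' : (1 : ℝ) ≤ u := by exact_mod_cast hu
  have hPpos : (0 : ℝ) < lossSeq A j := by exact_mod_cast lossSeq_pos hA j
  have hN' : (0 : ℝ) < N := by exact_mod_cast hN
  have hsum : l.sum ≤ W := by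
    by_contra hcon
    rw [Nat.sub_eq_zero_of_le (by omega)] at hl3
    simp only [range_zero, sum_empty, norm_zero] at hl3
    have : 0 < (N : ℝ) / lossSeq A j := by positivity
    linarith
  have hplow : q ^ j ≤ l.prod := by
    rw [← hl1]; exact List.pow_card_le_prod _ _ fun h hh => (hl2 h hh).1
  have hpup : l.prod ≤ (q * lossSeq A j) ^ j := by
    have := List.prod_le_pow_card l (q * lossSeq A j) fun h hh => (hl2 h hh).2
    rwa [hl1] at this
  have hplow' : (q : ℝ) ^ j ≤ l.prod := by exact_mod_cast hplow
  have hpup' : (l.prod : ℝ) ≤ ((q * lossSeq A j : ℕ) : ℝ) ^ j := by exact_mod_cast hpup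
  have hqpos : (0 : ℝ) < (q : ℝ) ^ j := by positivity
  have hppos : (0 : ℝ) < l.prod := hqpos.trans_le hplow'
  have hsum' : (l.sum : ℝ) + (W - l.sum : ℕ) = W := by
    rw [Nat.cast_sub hsum]; ring
  -- first differences
  have hd : ∀ n ≤ W - l.sum, ∃ z : ℝ, u ≤ z ∧ z ≤ u + W + 1 ∧
      iterDiff l (F 0) ((u + (n + 1) : ℕ) : ℝ) - iterDiff l (F 0) ((u + n : ℕ) : ℝ)
        = l.prod * F (j + 1) z := by
    intro n hn
    have hn' : (n : ℝ) ≤ (W - l.sum : ℕ) := by exact_mod_cast hn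
    obtain ⟨z, hz1, hz2, hz3⟩ := iterDiff_mvt hF (1 :: l) 0 ((u + n : ℕ) : ℝ) (by positivity)
    have hn0 : (0 : ℝ) ≤ n := by positivity
    push_cast at hz1
    simp only [List.sum_cons, Nat.cast_add, Nat.cast_one] at hz2
    refine ⟨z, by linarith, by linarith, ?_⟩
    simp only [iterDiff, List.prod_cons, List.length_cons, hl1, one_mul, zero_add, Nat.cast_one] at hz3
    rw [← hz3]; push_cast; rw [add_assoc]
  have hdd : ∀ n < W - l.sum, ∃ z : ℝ, u ≤ z ∧ z ≤ u + W + 1 ∧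
      (iterDiff l (F 0) ((u + (n + 2) : ℕ) : ℝ) - iterDiff l (F 0) ((u + (n + 1) : ℕ) : ℝ))
        - (iterDiff l (F 0) ((u + (n + 1) : ℕ) : ℝ) - iterDiff l (F 0) ((u + n : ℕ) : ℝ))
        = l.prod * F (j + 2) z := by
    intro n hn
    have hn' : (n : ℝ) + 1 ≤ (W - l.sum : ℕ) := by exact_mod_cast hn
    obtain ⟨z, hz1, hz2, hz3⟩ := iterDiff_mvt hF (1 :: 1 :: l) 0 ((u + n : ℕ) : ℝ) (by positivity)
    have hn0 : (0 : ℝ) ≤ n := by positivity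
    push_cast at hz1
    simp only [List.sum_cons, Nat.cast_add, Nat.cast_one] at hz2
    refine ⟨z, by linarith, by linarith, ?_⟩
    simp only [iterDiff, List.prod_cons, List.length_cons, hl1, one_mul, zero_add, Nat.cast_one] at hz3
    rw [add_assoc j 1 1] at hz3
    rw [← hz3]; push_cast
    rw [show (u : ℝ) + n + 1 + 1 = u + (n + 2) by ring, show (u : ℝ) + n + 1 = u + (n + 1) by ring]
  have hmu : 0 ≤ mu := (abs_nonneg _).trans (h3 u le_rfl (by linarith [Nat.cast_nonneg (α := ℝ) W]))
  have hKL := kusmin_landau (fun n => iterDiff l (F 0) ((u + n : ℕ) : ℝ)) (W - l.sum)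
    (lam := l.prod * lam) (mu := l.prod * mu) (by positivity)
    (fun n hn => by
      obtain ⟨z, hz1, hz2, hz3⟩ := hd n hn
      rw [hz3, abs_mul, abs_of_pos hppos]
      have := h1 z hz1 hz2
      gcongr)
    (fun n hn => by
      obtain ⟨z, hz1, hz2, hz3⟩ := hd n hn
      rw [hz3, abs_mul, abs_of_pos hppos]
      refine le_trans ?_ hLam
      have := h2 z hz1 hz2
      gcongr)
    (fun n hn => by
      obtain ⟨z, hz1, hz2, hz3⟩ := hdd n hn
      rw [hz3, abs_mul, abs_of_pos hppos]
      have := h3 z hz1 hz2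
      gcongr)
  refine hl3.trans (hKL.trans ?_)
  have hWW : ((W - l.sum : ℕ) : ℝ) ≤ W := by exact_mod_cast Nat.sub_le _ _
  calc 1 / (l.prod * lam) + ((W - l.sum : ℕ) : ℝ) * (l.prod * mu) / (l.prod * lam) ^ 2
      = (1 / lam + ((W - l.sum : ℕ) : ℝ) * mu / lam ^ 2) / l.prod := by field_simp
    _ ≤ (1 / lam + W * mu / lam ^ 2) / (q : ℝ) ^ j := by gcongr

/-- Pigeonholing a sum into blocks of length at most `W`. -/
lemma norm_sum_le_blocks (a : ℕ → ℂ) (W : ℕ) {Y : ℝ} (hY : 0 ≤ Y) (L : ℕ) :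
    ∀ N', N' ≤ L * W → (∀ u W', W' ≤ W → u + W' ≤ N' → ‖∑ n ∈ range W', a (u + n)‖ ≤ Y) →
      ‖∑ n ∈ range N', a n‖ ≤ L * Y := by
  induction L with
  | zero => intro N' hN' _; simp only [zero_mul, Nat.le_zero] at hN'; simp [hN']
  | succ L ih =>
    intro N' hN' h
    rcases le_total N' (L * W) with h1 | h1
    · have := ih N' h1 h
      push_cast; linarith
    · obtain ⟨W', rfl⟩ := Nat.exists_eq_add_of_le h1
      rw [sum_range_add]
      have e1 := ih (L * W) le_rfl fun u W'' h2 h3 => h u W'' h2 (by omega)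
      have e2 := h (L * W) W' (by rw [add_mul] at hN'; omega) le_rfl
      push_cast
      linarith [norm_add_le (∑ n ∈ range (L * W), a n) (∑ n ∈ range W', a (L * W + n))]

/-! ### The phase function -/

/-- The falling factorial `c (c - 1) ⋯ (c - k + 1)`. -/
def fallFac (c : ℝ) (k : ℕ) : ℝ := ∏ l ∈ range k, (c - l)

/-- The `k`-th derivative of the phase `x ↦ ∑ i, θ i * x ^ c i` on `(0, ∞)`. -/
def phase {m : ℕ} (c θ : Fin m → ℝ) (k : ℕ) (x : ℝ) : ℝ :=
  ∑ i, θ i * (fallFac (c i) k * x ^ (c i - k))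

/-- The size of the phase at scale `N`. -/
def phaseSize {m : ℕ} (c θ : Fin m → ℝ) (N : ℝ) : ℝ := ∑ i, |θ i| * N ^ c i

lemma phase_zero {m : ℕ} (c θ : Fin m → ℝ) (x : ℝ) : phase c θ 0 x = ∑ i, θ i * x ^ c i := by
  simp [phase, fallFac]

lemma phase_hasDerivAt {m : ℕ} (c θ : Fin m → ℝ) (k : ℕ) (x : ℝ) (hx : 0 < x) :
    HasDerivAt (phase c θ k) (phase c θ (k + 1) x) x := by
  unfold phase
  refine HasDerivAt.fun_sum fun i _ => ?_
  have h := ((Real.hasDerivAt_rpow_const (x := x) (p := c i - k) (Or.inl hx.ne')).const_mul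
    (fallFac (c i) k)).const_mul (θ i)
  refine h.congr_deriv ?_
  rw [fallFac, fallFac, prod_range_succ, show c i - ((k + 1 : ℕ) : ℝ) = c i - k - 1 by push_cast; ring]
  ring

lemma phaseSize_nonneg {m : ℕ} (c θ : Fin m → ℝ) {N : ℝ} (hN : 0 ≤ N) : 0 ≤ phaseSize c θ N :=
  Finset.sum_nonneg fun i _ => by positivity

lemma phase_upper {m : ℕ} (c : Fin m → ℝ) (J : ℕ) : ∃ B : ℝ, 1 ≤ B ∧
    ∀ (θ : Fin m → ℝ) (N x : ℝ), 0 < N → N / 2 ≤ x → x ≤ 3 * N → ∀ k < J,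
      |phase c θ k x| ≤ B * phaseSize c θ N / N ^ k := by
  set t : Fin m → ℕ → ℝ := fun i k => |fallFac (c i) k| * (3 : ℝ) ^ |c i - k| with ht
  have ht0 : ∀ i k, 0 ≤ t i k := fun i k => by positivity
  refine ⟨1 + ∑ i, ∑ k ∈ range J, t i k, ?_, ?_⟩
  · have : 0 ≤ ∑ i, ∑ k ∈ range J, t i k :=
      sum_nonneg fun i _ => sum_nonneg fun k _ => ht0 i k
    linarith
  intro θ N x hN hx1 hx2 k hk
  have hx : 0 < x := by linarith
  have hterm : ∀ i, |fallFac (c i) k * x ^ (c i - k)| ≤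
      (1 + ∑ i, ∑ k ∈ range J, t i k) * (N ^ c i / N ^ k) := by
    intro i
    have h1 : t i k ≤ 1 + ∑ i, ∑ k ∈ range J, t i k := by
      have e1 := single_le_sum (f := fun i => ∑ k ∈ range J, t i k)
        (fun i _ => sum_nonneg fun k _ => ht0 i k) (mem_univ i)
      have e2 := single_le_sum (f := fun k => t i k) (fun k _ => ht0 i k) (mem_range.2 hk)
      linarith
    have h2 : x ^ (c i - k) ≤ 3 ^ |c i - k| * (N ^ c i / N ^ k) := by
      rw [← Real.rpow_natCast N k, ← Real.rpow_sub hN]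
      have hxN : x = (x / N) * N := by field_simp
      rw [hxN, Real.mul_rpow (by positivity) hN.le]
      gcongr
      rcases le_total 0 (c i - k) with h | h
      · rw [abs_of_nonneg h]
        exact Real.rpow_le_rpow (by positivity) (by rw [div_le_iff₀ hN]; linarith) h
      · rw [abs_of_nonpos h]
        calc (x / N) ^ (c i - k) ≤ (1 / 3 : ℝ) ^ (c i - k) :=
              Real.rpow_le_rpow_of_nonpos (by norm_num)
                (by rw [le_div_iff₀ hN]; linarith) h
          _ = 3 ^ (-(c i - k)) := by
              rw [one_div, Real.inv_rpow (by norm_num), Real.rpow_neg (by norm_num)]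
    rw [abs_mul, abs_of_pos (Real.rpow_pos_of_pos hx _)]
    calc |fallFac (c i) k| * x ^ (c i - k)
        ≤ |fallFac (c i) k| * (3 ^ |c i - k| * (N ^ c i / N ^ k)) := by gcongr
      _ = t i k * (N ^ c i / N ^ k) := by simp only [ht]; ring
      _ ≤ _ := by gcongr
  unfold phase phaseSize
  refine (abs_sum_le_sum_abs _ _).trans ?_
  rw [mul_div_assoc, Finset.sum_div, Finset.mul_sum]
  refine sum_le_sum fun i _ => ?_
  rw [abs_mul]
  calc |θ i| * |fallFac (c i) k * x ^ (c i - k)|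
      ≤ |θ i| * ((1 + ∑ i, ∑ k ∈ range J, t i k) * (N ^ c i / N ^ k)) := by
        gcongr; exact hterm i
    _ = _ := by ring

/-- The invertibility of the matrix of the monic polynomials `∏_{l < j} (X - K - l)` evaluated at
distinct nodes, in quantitative form. -/
lemma vandermonde_lower {m : ℕ} (hm : 0 < m) (c : Fin m → ℝ) (hc : Function.Injective c) (K : ℕ) :
    ∃ D : ℝ, 0 < D ∧ ∀ b : Fin m → ℝ, ∃ j : Fin m,
      (∑ i, |b i|) / D ≤ |∑ i, b i * ∏ l ∈ range j, (c i - (K + l : ℕ))| := by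
  set p : Fin m → Polynomial ℝ := fun j =>
    ∏ l ∈ range j, (Polynomial.X - Polynomial.C ((K + l : ℕ) : ℝ)) with hp
  set V : Matrix (Fin m) (Fin m) ℝ := Matrix.of fun i j => (p j).eval (c i) with hV
  have hdet : IsUnit V.det := by
    have h := Matrix.det_eval_matrixOfPolynomials_eq_det_vandermonde c p
      (fun j => by simp only [hp]; rw [Polynomial.natDegree_finsetProd_X_sub_C_eq_card]; simp)
      (fun j => Polynomial.monic_prod_X_sub_C _ _)
    rw [isUnit_iff_ne_zero, hV, ← h]
    exact Matrix.det_vandermonde_ne_zero_iff.2 hc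
  set D : ℝ := 1 + ∑ i, ∑ j, |V⁻¹ j i| with hD
  have hs0 : 0 ≤ ∑ i, ∑ j, |V⁻¹ j i| := sum_nonneg fun i _ => sum_nonneg fun j _ => abs_nonneg _
  have hDpos : 0 < D := by linarith
  refine ⟨D, hDpos, fun b => ?_⟩
  by_contra! hcon
  set S := ∑ i, |b i| with hS
  have hy : ∀ j, (Matrix.vecMul b V) j = ∑ i, b i * ∏ l ∈ range j, (c i - (K + l : ℕ)) := by
    intro j
    simp [Matrix.vecMul, dotProduct, hV, hp, Polynomial.eval_prod]
  have hb : b = Matrix.vecMul (Matrix.vecMul b V) V⁻¹ := by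
    rw [Matrix.vecMul_vecMul, Matrix.mul_nonsing_inv _ hdet, Matrix.vecMul_one]
  have hSpos : 0 < S := by
    have h := (abs_nonneg _).trans_lt (hcon ⟨0, hm⟩)
    exact (div_pos_iff_of_pos_right hDpos).1 h
  have hle : S ≤ S / D * (D - 1) := by
    have h1 : ∀ i, |b i| ≤ ∑ j, S / D * |V⁻¹ j i| := by
      intro i
      conv_lhs => rw [hb]
      simp only [Matrix.vecMul, dotProduct]
      refine (abs_sum_le_sum_abs _ _).trans (sum_le_sum fun j _ => ?_)
      rw [abs_mul]
      have := hy j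
      simp only [Matrix.vecMul, dotProduct] at this
      rw [this]
      exact mul_le_mul_of_nonneg_right (hcon j).le (abs_nonneg _)
    calc S ≤ ∑ i, ∑ j, S / D * |V⁻¹ j i| := sum_le_sum fun i _ => h1 i
      _ = S / D * (D - 1) := by
        simp_rw [← Finset.mul_sum]; rw [hD]; ring
  have : S / D * (D - 1) = S - S / D := by field_simp
  have : 0 < S / D := by positivity
  linarith

/-- Since the exponents are distinct and not integers, at every point some derivative of the
phase of order in `[K, K + m)` is as large as its trivial bound, up to a constant. -/
lemma phase_lower {m : ℕ} (hm : 0 < m) (c : Fin m → ℝ) (hc : Function.Injective c)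
    (hpos : ∀ i, 0 < c i) (hint : ∀ i, ∀ k : ℤ, c i ≠ (k : ℝ)) (K : ℕ) :
    ∃ b : ℝ, 0 < b ∧ ∀ (θ : Fin m → ℝ) (N x : ℝ), 0 < N → N / 2 ≤ x → x ≤ 3 * N →
      ∃ j < m, b * phaseSize c θ N / N ^ (K + j) ≤ |phase c θ (K + j) x| := by
  obtain ⟨D, hD, hDb⟩ := vandermonde_lower hm c hc K
  have hff : ∀ i, 0 < |fallFac (c i) K| := fun i => by
    rw [abs_pos, fallFac, prod_ne_zero_iff]
    intro l _ h
    exact hint i l (by push_cast; linarith)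
  have hne : (univ : Finset (Fin m)).Nonempty := ⟨⟨0, hm⟩, mem_univ _⟩
  obtain ⟨i₀, -, hi₀⟩ := exists_min_image univ
    (fun i => |fallFac (c i) K| * (1 / 2 : ℝ) ^ c i) hne
  set κ := |fallFac (c i₀) K| * (1 / 2 : ℝ) ^ c i₀ with hκ
  have hκpos : 0 < κ := mul_pos (hff i₀) (by positivity)
  refine ⟨κ / D / 3 ^ (K + m), by positivity, fun θ N x hN hx1 hx2 => ?_⟩
  have hx : 0 < x := by linarith
  obtain ⟨j, hj⟩ := hDb fun i => θ i * fallFac (c i) K * x ^ c i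
  refine ⟨j, j.2, ?_⟩
  have hphase : phase c θ (K + j) x =
      (∑ i, (θ i * fallFac (c i) K * x ^ c i) * ∏ l ∈ range j, (c i - (K + l : ℕ)))
        / x ^ (K + j : ℕ) := by
    unfold phase
    rw [Finset.sum_div]
    refine sum_congr rfl fun i _ => ?_
    rw [Real.rpow_sub_natCast hx.ne', fallFac, fallFac, prod_range_add]
    ring
  have hsize : κ * phaseSize c θ N ≤ ∑ i, |θ i * fallFac (c i) K * x ^ c i| := by
    rw [phaseSize, Finset.mul_sum]
    refine sum_le_sum fun i _ => ?_
    rw [abs_mul, abs_mul, abs_of_pos (Real.rpow_pos_of_pos hx _)]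
    have h1 : (1 / 2 : ℝ) ^ c i * N ^ c i ≤ x ^ c i := by
      rw [← Real.mul_rpow (by norm_num) hN.le]
      exact Real.rpow_le_rpow (by positivity) (by linarith) (hpos i).le
    calc κ * (|θ i| * N ^ c i)
        ≤ (|fallFac (c i) K| * (1 / 2 : ℝ) ^ c i) * (|θ i| * N ^ c i) := by
          gcongr; exact hi₀ i (mem_univ i)
      _ = |θ i| * |fallFac (c i) K| * ((1 / 2 : ℝ) ^ c i * N ^ c i) := by ring
      _ ≤ _ := by gcongr
  rw [hphase, abs_div, abs_of_pos (pow_pos hx _), le_div_iff₀ (pow_pos hx _)]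
  refine le_trans ?_ hj
  have hs := phaseSize_nonneg c θ hN.le
  have hxp : x ^ (K + j : ℕ) ≤ 3 ^ (K + m) * N ^ (K + j : ℕ) := by
    calc x ^ (K + j : ℕ) ≤ (3 * N) ^ (K + j : ℕ) := by gcongr
      _ = 3 ^ (K + j : ℕ) * N ^ (K + j : ℕ) := mul_pow _ _ _
      _ ≤ _ := by
        gcongr
        · norm_num
        · exact j.2.le
  calc κ / D / 3 ^ (K + m) * phaseSize c θ N / N ^ (K + j : ℕ) * x ^ (K + j : ℕ)
      ≤ κ / D / 3 ^ (K + m) * phaseSize c θ N / N ^ (K + j : ℕ) *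
        (3 ^ (K + m) * N ^ (K + j : ℕ)) := by gcongr
    _ = κ * phaseSize c θ N / D := by field_simp
    _ ≤ _ := by gcongr

/-! ### The inverse theorem for smooth phases -/

/-- The choice of the step `q` of the differencing shifts: the largest admissible one is optimal. -/
lemma optimize_step {N P : ℕ} (j : ℕ) {M B G : ℝ} (hP : 1 ≤ P) (hM : 0 < M) (hB : 0 < B)
    (hPN : P ≤ N) (hone : 2 * B * M * (P : ℝ) ^ j ≤ (N : ℝ) ^ (j + 1))
    (test : ∀ q : ℕ, 1 ≤ q → q * P ≤ N →
      ((q * P : ℕ) : ℝ) ^ j * (B * M / (N : ℝ) ^ (j + 1)) ≤ 1 / 2 →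
      (N : ℝ) / P ≤ (G * (N : ℝ) ^ (j + 1) / M) / (q : ℝ) ^ j) :
    M ≤ (2 * P) ^ j * G * P ∨ (N : ℝ) ≤ 2 * B * ((2 * P) ^ j * G * P) := by
  classical
  have hN : 1 ≤ N := hP.trans hPN
  have hN' : (0 : ℝ) < N := by exact_mod_cast hN
  have hP' : (0 : ℝ) < P := by exact_mod_cast hP
  set good : ℕ → Prop := fun q => q * P ≤ N ∧
    2 * B * M * ((q * P : ℕ) : ℝ) ^ j ≤ (N : ℝ) ^ (j + 1) with hgood
  have h1 : good 1 := ⟨by simpa using hPN, by simpa using hone⟩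
  set q := Nat.findGreatest good N with hq
  have hq1 : 1 ≤ q := Nat.le_findGreatest hN h1
  have hgq : good q := Nat.findGreatest_spec hN h1
  have hbad : ¬ good (q + 1) := by
    intro h
    have : q + 1 ≤ N := (Nat.le_mul_of_pos_right _ hP).trans h.1
    exact absurd (Nat.le_findGreatest this h) (by omega)
  have hq' : (1 : ℝ) ≤ q := by exact_mod_cast hq1
  have ht := test q hq1 hgq.1 (by
    have := hgq.2
    rw [← mul_div_assoc, div_le_iff₀ (by positivity)]
    linarith)
  -- the outcome of the test: `M q ^ j ≤ G P N ^ j`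
  have hkey : M * (q : ℝ) ^ j ≤ G * P * (N : ℝ) ^ j := by
    rw [div_div, div_le_div_iff₀ hP' (by positivity)] at ht
    have : (N : ℝ) * (M * (q : ℝ) ^ j) ≤ N * (G * P * (N : ℝ) ^ j) := by
      rw [pow_succ] at ht; linarith
    exact le_of_mul_le_mul_left this hN'
  have h2q : ((q : ℝ) + 1) * P ≤ 2 * q * P := by gcongr; linarith
  rw [hgood] at hbad
  simp only [not_and_or, not_le] at hbad
  rcases hbad with h | h
  · left
    have h' : (N : ℝ) ≤ 2 * q * P := by
      have : (N : ℝ) < ((q + 1) * P : ℕ) := by exact_mod_cast h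
      push_cast at this; linarith
    have : M * (N : ℝ) ^ j ≤ ((2 * P) ^ j * G * P) * (N : ℝ) ^ j := by
      calc M * (N : ℝ) ^ j ≤ M * (2 * q * P) ^ j := by gcongr
        _ = (2 * P) ^ j * (M * (q : ℝ) ^ j) := by rw [mul_pow, mul_pow, mul_pow]; ring
        _ ≤ (2 * P) ^ j * (G * P * (N : ℝ) ^ j) := by gcongr
        _ = _ := by ring
    exact le_of_mul_le_mul_right this (by positivity)
  · right
    have : (N : ℝ) * (N : ℝ) ^ j ≤ 2 * B * ((2 * P) ^ j * G * P) * (N : ℝ) ^ j := by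
      calc (N : ℝ) * (N : ℝ) ^ j = (N : ℝ) ^ (j + 1) := by ring
        _ ≤ 2 * B * M * (((q + 1) * P : ℕ) : ℝ) ^ j := h.le
        _ ≤ 2 * B * M * (2 * q * P) ^ j := by push_cast; gcongr
        _ = 2 * B * (2 * P) ^ j * (M * (q : ℝ) ^ j) := by rw [mul_pow, mul_pow, mul_pow]; ring
        _ ≤ 2 * B * (2 * P) ^ j * (G * P * (N : ℝ) ^ j) := by gcongr
        _ = _ := by ring
    exact le_of_mul_le_mul_right this (by positivity)

set_option maxHeartbeats 1000000 in
/-- The inverse theorem for the sums without integer parts: a correlation `≥ 1 / A` forces `N` or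
the phase size to be bounded by a fixed power of `A`. -/
lemma smooth_inverse {m : ℕ} (hm : 0 < m) (c : Fin m → ℝ) (hc : Function.Injective c)
    (hpos : ∀ i, 0 < c i) (hint : ∀ i, ∀ k : ℤ, c i ≠ (k : ℝ)) :
    ∃ C : ℕ, ∀ N : ℕ, 1 ≤ N → ∀ A : ℕ, 2 ≤ A → ∀ θ : Fin m → ℝ, (∀ i, |θ i| ≤ A) →
      (N : ℝ) / A ≤ ‖∑ n ∈ Finset.Ioc (N / 2) N, eC (∑ i, θ i * (n : ℝ) ^ c i)‖ →
      (N : ℝ) ≤ (A : ℝ) ^ C ∨ phaseSize c θ N ≤ (A : ℝ) ^ C := by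
  -- all exponents are at most `K₀`; derivatives of order `> K₀` are used
  obtain ⟨K₀, hK₀⟩ : ∃ K₀ : ℕ, ∀ i, c i ≤ K₀ := by
    obtain ⟨K₀, h⟩ := exists_nat_ge (∑ i, c i)
    exact ⟨K₀, fun i => (single_le_sum (fun i _ => (hpos i).le) (mem_univ i)).trans h⟩
  obtain ⟨B, hB1, hB⟩ := phase_upper c (K₀ + 1 + m + 1)
  obtain ⟨b, hb0, hb⟩ := phase_lower hm c hc hpos hint (K₀ + 1)
  obtain ⟨L, hL⟩ := exists_nat_ge (4 * B / b)
  have hLpos' : (0 : ℝ) < L := lt_of_lt_of_le (by positivity) hL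
  have hLpos : 1 ≤ L := by exact_mod_cast hLpos'
  set J := K₀ + m with hJ
  set G : ℝ := 2 / b + 4 * B / b ^ 2 with hG
  have hGpos : 0 < G := by positivity
  obtain ⟨e, he⟩ := lossSeq_le_pow J
  obtain ⟨Z, hZ⟩ := exists_nat_ge (2 * L + 1 + 2 * B * m + 2 ^ J * G + 2 * B * (2 ^ J * G))
  refine ⟨Z + (2 * L + 1) * e * (J + 1) + 1, fun N hN A hA θ hθ hS => ?_⟩
  have hA' : (2 : ℝ) ≤ A := by exact_mod_cast hA
  have hN' : (1 : ℝ) ≤ N := by exact_mod_cast hN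
  set M := phaseSize c θ N with hM
  set Pm := lossSeq (2 * A * L) J with hPm
  have hAL : 2 ≤ 2 * A * L := by nlinarith
  have hPm1 : (1 : ℝ) ≤ Pm := by exact_mod_cast lossSeq_pos (by omega) J
  -- everything is bounded by `E`, which is at most the announced power of `A`
  set E : ℝ := Z * (Pm : ℝ) ^ (J + 1) * A with hE
  have hEle : E ≤ (A : ℝ) ^ (Z + (2 * L + 1) * e * (J + 1) + 1) := by
    have e1 : (Z : ℝ) ≤ (A : ℝ) ^ Z := by
      have : Z ≤ A ^ Z := (Nat.lt_pow_self (by omega : 1 < A)).le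
      exact_mod_cast this
    have e2 : 2 * A * L ≤ A ^ (2 * L + 1) := by
      have : 2 * L ≤ A ^ (2 * L) := (Nat.lt_pow_self (by omega : 1 < A)).le
      rw [pow_succ]; nlinarith
    have e3 : (Pm : ℝ) ≤ ((A : ℝ) ^ (2 * L + 1)) ^ e := by
      have := (he _ hAL).trans (Nat.pow_le_pow_left e2 e)
      exact_mod_cast this
    calc E ≤ (A : ℝ) ^ Z * (((A : ℝ) ^ (2 * L + 1)) ^ e) ^ (J + 1) * A := by
          rw [hE]; gcongr
      _ = _ := by rw [← pow_mul, ← pow_mul, pow_succ _ (Z + _), pow_add _ Z,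
          mul_assoc (2 * L + 1) e (J + 1)]
  suffices h : (N : ℝ) ≤ E ∨ M ≤ E from h.imp (·.trans hEle) (·.trans hEle)
  by_contra! hcon
  obtain ⟨hNE, hME⟩ := hcon
  have hone_le : 1 ≤ (Pm : ℝ) ^ (J + 1) := one_le_pow₀ hPm1
  have hZ0 : 0 ≤ 2 * B * m + 2 ^ J * G + 2 * B * (2 ^ J * G) := by positivity
  have hE2 : ∀ z t s : ℝ, 0 ≤ z → z ≤ Z → 0 ≤ t → t ≤ (Pm : ℝ) ^ (J + 1) → 0 ≤ s → s ≤ A →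
      z * t * s ≤ E := fun z t s h1 h2 h3 h4 h5 h6 => by rw [hE]; gcongr
  have hMpos : 0 < M := lt_of_le_of_lt (by positivity) hME
  have hN2L : 2 * (L : ℝ) ≤ N := by
    have := hE2 (2 * L) 1 1 (by positivity) (by linarith) (by norm_num) hone_le (by norm_num) (by linarith)
    linarith
  -- a block of length at most `N / L + 1` with a large sum
  obtain ⟨u', W, hW1, hW2, hWS⟩ : ∃ u' W, W ≤ N / L + 1 ∧ u' + W ≤ N - N / 2 ∧
      (N : ℝ) / (2 * A * L : ℕ) ≤
        ‖∑ n ∈ range W, eC (∑ i, θ i * ((N / 2 + 1 + u' + n : ℕ) : ℝ) ^ c i)‖ := by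
    by_contra! h
    have hb := norm_sum_le_blocks (fun n => eC (∑ i, θ i * ((N / 2 + 1 + n : ℕ) : ℝ) ^ c i))
      (N / L + 1) (Y := (N : ℝ) / (2 * A * L : ℕ)) (by positivity) L (N - N / 2)
      ((Nat.sub_le _ _).trans (Nat.lt_mul_div_succ N (by omega)).le)
      (fun u' W h1 h2 => by
        have := (h u' W h1 h2).le
        simpa only [add_assoc] using this)
    have hre : Finset.Ioc (N / 2) N = Finset.Ico (N / 2 + 1) (N + 1) := by
      ext n; simp only [Finset.mem_Ioc, Finset.mem_Ico]; omega
    rw [hre, Finset.sum_Ico_eq_sum_range, show N + 1 - (N / 2 + 1) = N - N / 2 by omega] at hS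
    have h2 := hS.trans hb
    have e1 : L * ((N : ℝ) / (2 * A * L : ℕ)) = (N / A) / 2 := by push_cast; field_simp
    have e2 : 0 < (N : ℝ) / A := by positivity
    linarith
  set u := N / 2 + 1 + u' with hu
  have hu1 : (N : ℝ) / 2 ≤ u := by
    have : N ≤ 2 * u := by omega
    have : (N : ℝ) ≤ 2 * u := by exact_mod_cast this
    linarith
  have huW : (u : ℝ) + W + 1 ≤ 3 * N := by
    have : u + W + 1 ≤ 3 * N := by omega
    exact_mod_cast this
  have hWL : (W : ℝ) + 1 ≤ 2 * (N / L) := by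
    have h1 : (W : ℝ) ≤ (N / L : ℕ) + 1 := by exact_mod_cast hW1
    have h2 : ((N / L : ℕ) : ℝ) ≤ N / L := Nat.cast_div_le
    have h3 : 2 ≤ (N : ℝ) / L := by rw [le_div_iff₀ hLpos']; linarith
    linarith
  have hNpos : (0 : ℝ) < N := by linarith
  -- a large derivative at the left end point, hence on the whole block
  obtain ⟨j', hj'm, hj'⟩ := hb θ N u hNpos hu1 (by linarith [Nat.cast_nonneg (α := ℝ) W])
  set j := K₀ + j' with hj
  have hjk : K₀ + 1 + j' = j + 1 := by omega
  rw [hjk, ← hM] at hj'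
  have hup1 : ∀ x : ℝ, u ≤ x → x ≤ u + W + 1 → |phase c θ (j + 1) x| ≤ B * M / (N : ℝ) ^ (j + 1) :=
    fun x h1 h2 => hB θ N x hNpos (by linarith) (by linarith) (j + 1) (by omega)
  have hup2 : ∀ x : ℝ, u ≤ x → x ≤ u + W + 1 → |phase c θ (j + 2) x| ≤ B * M / (N : ℝ) ^ (j + 2) :=
    fun x h1 h2 => hB θ N x hNpos (by linarith) (by linarith) (j + 2) (by omega)
  have hlow : ∀ x : ℝ, u ≤ x → x ≤ u + W + 1 →
      b * M / (2 * (N : ℝ) ^ (j + 1)) ≤ |phase c θ (j + 1) x| := by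
    intro x h1 h2
    have hmvt : ‖phase c θ (j + 1) x - phase c θ (j + 1) u‖ ≤
        B * M / (N : ℝ) ^ (j + 2) * ‖x - u‖ :=
      Convex.norm_image_sub_le_of_norm_hasDerivWithin_le (s := Set.Icc (u : ℝ) (u + W + 1))
        (fun y hy => (phase_hasDerivAt c θ (j + 1) y (by linarith [hy.1])).hasDerivWithinAt)
        (fun y hy => hup2 y hy.1 hy.2) (convex_Icc _ _)
        ⟨le_rfl, by linarith⟩ ⟨h1, h2⟩
    rw [Real.norm_eq_abs, Real.norm_eq_abs, abs_of_nonneg (sub_nonneg.2 h1)] at hmvt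
    have h3 : B * M / (N : ℝ) ^ (j + 2) * (x - u) ≤ b * M / (2 * (N : ℝ) ^ (j + 1)) := by
      calc B * M / (N : ℝ) ^ (j + 2) * (x - u)
          ≤ B * M / (N : ℝ) ^ (j + 2) * (2 * (N / L)) := by gcongr; linarith
        _ = (4 * B / L) * (M / (2 * (N : ℝ) ^ (j + 1))) := by field_simp; ring
        _ ≤ b * (M / (2 * (N : ℝ) ^ (j + 1))) := by
            gcongr
            rw [div_le_iff₀ hLpos']
            rw [div_le_iff₀ hb0] at hL
            linarith
        _ = _ := by ring
    have h4 : b * M / (N : ℝ) ^ (j + 1) = 2 * (b * M / (2 * (N : ℝ) ^ (j + 1))) := by field_simp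
    have h5 := abs_sub_abs_le_abs_sub (phase c θ (j + 1) u) (phase c θ (j + 1) x)
    rw [abs_sub_comm] at h5
    linarith
  set P := lossSeq (2 * A * L) j with hP
  have hP1 : 1 ≤ P := lossSeq_pos (by omega) j
  have hP1' : (1 : ℝ) ≤ P := by exact_mod_cast hP1
  have hPPm : (P : ℝ) ≤ Pm := by exact_mod_cast lossSeq_mono (by omega) (by omega : j ≤ J)
  have hpowj : ∀ i ≤ J + 1, (P : ℝ) ^ i ≤ (Pm : ℝ) ^ (J + 1) := fun i hi =>
    (pow_le_pow_left₀ (by linarith) hPPm i).trans (pow_le_pow_right₀ hPm1 hi)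
  have h2J : (2 : ℝ) ^ j ≤ 2 ^ J := pow_le_pow_right₀ (by norm_num) (by omega)
  have hBm : 0 ≤ 2 * B * m := by positivity
  have hZ1 : 0 ≤ 2 ^ J * G := by positivity
  have hZ2 : 0 ≤ 2 * B * (2 ^ J * G) := by positivity
  have hPN : P ≤ N := by
    have h := hE2 1 (P ^ 1) 1 (by norm_num) (by linarith) (by positivity) (hpowj 1 (by omega))
      (by norm_num) (by linarith)
    have : (P : ℝ) ≤ N := by linarith
    exact_mod_cast this
  have hMle : M ≤ m * (A * (N : ℝ) ^ K₀) := by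
    rw [hM, phaseSize]
    refine (sum_le_card_nsmul univ _ (A * (N : ℝ) ^ K₀) fun i _ => ?_).trans (by simp)
    gcongr
    · exact hθ i
    · rw [← Real.rpow_natCast]
      exact Real.rpow_le_rpow_of_exponent_le hN' (hK₀ i)
  have hone : 2 * B * M * (P : ℝ) ^ j ≤ (N : ℝ) ^ (j + 1) := by
    have h := hE2 (2 * B * m) (P ^ j) A hBm (by linarith) (by positivity)
      (hpowj j (by omega)) (by linarith) le_rfl
    calc 2 * B * M * (P : ℝ) ^ j ≤ 2 * B * (m * (A * (N : ℝ) ^ j)) * (P : ℝ) ^ j := by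
          have : (N : ℝ) ^ K₀ ≤ (N : ℝ) ^ j := pow_le_pow_right₀ hN' (by omega)
          gcongr
          refine hMle.trans ?_
          gcongr
      _ = (2 * B * m * P ^ j * A) * (N : ℝ) ^ j := by ring
      _ ≤ N * (N : ℝ) ^ j := by gcongr; linarith
      _ = _ := by ring
  have hWN : W ≤ N := by omega
  have hfin := optimize_step (N := N) (P := P) j (M := M) (B := B) (G := G) hP1 hMpos (by linarith)
    hPN hone (fun q hq1 hq2 hq3 => by
      have h := derivative_test (phase_hasDerivAt c θ) u W N (2 * A * L) q j (by omega) (by omega)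
        hN hWN hq1 hq2 (lam := b * M / (2 * (N : ℝ) ^ (j + 1)))
        (Lam := B * M / (N : ℝ) ^ (j + 1)) (mu := B * M / (N : ℝ) ^ (j + 2))
        (by positivity) hlow hup1 hup2 hq3 (by simpa only [phase_zero] using hWS)
      refine h.trans ?_
      gcongr
      have hWN' : (W : ℝ) ≤ N := by exact_mod_cast hWN
      calc 1 / (b * M / (2 * (N : ℝ) ^ (j + 1))) +
            W * (B * M / (N : ℝ) ^ (j + 2)) / (b * M / (2 * (N : ℝ) ^ (j + 1))) ^ 2
          ≤ 1 / (b * M / (2 * (N : ℝ) ^ (j + 1))) +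
            N * (B * M / (N : ℝ) ^ (j + 2)) / (b * M / (2 * (N : ℝ) ^ (j + 1))) ^ 2 := by gcongr
        _ = G * (N : ℝ) ^ (j + 1) / M := by
            rw [hG]; field_simp; ring)
  have hbase : (2 * (P : ℝ)) ^ j * G * P ≤ (2 ^ J * G) * P ^ (j + 1) * 1 := by
    calc (2 * (P : ℝ)) ^ j * G * P = (2 ^ j * G) * P ^ (j + 1) * 1 := by rw [mul_pow]; ring
      _ ≤ _ := by gcongr
  rcases hfin with h | h
  · have := hE2 (2 ^ J * G) (P ^ (j + 1)) 1 hZ1 (by linarith) (by positivity)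
      (hpowj (j + 1) (by omega)) (by norm_num) (by linarith)
    exact absurd (h.trans (hbase.trans this)) (not_le.2 hME)
  · have h2 := hE2 (2 * B * (2 ^ J * G)) (P ^ (j + 1)) 1 hZ2 (by linarith) (by positivity)
      (hpowj (j + 1) (by omega)) (by norm_num) (by linarith)
    have h3 : 2 * B * ((2 * (P : ℝ)) ^ j * G * P) ≤ 2 * B * ((2 ^ J * G) * P ^ (j + 1) * 1) := by
      gcongr
    have h4 : 2 * B * ((2 ^ J * G) * P ^ (j + 1) * 1) = 2 * B * (2 ^ J * G) * P ^ (j + 1) * 1 := by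
      ring
    exact absurd (h.trans (h3.trans (h4.le.trans h2))) (not_le.2 hNE)

/-! ### A Fejér kernel on the grid `ℤ / Q` -/

/-- The Fejér kernel `K_Q(y) = |Q⁻¹ ∑_{r < Q} e(r y)|²`. -/
def fejer (Q : ℕ) (y : ℝ) : ℝ := ‖∑ r ∈ range Q, eC (r * y)‖ ^ 2 / (Q : ℝ) ^ 2

lemma fejer_nonneg (Q : ℕ) (y : ℝ) : 0 ≤ fejer Q y := by unfold fejer; positivity

lemma fejer_expand (Q : ℕ) (y : ℝ) :
    (fejer Q y : ℂ) = ((Q : ℂ) ^ 2)⁻¹ * ∑ r ∈ range Q, ∑ s ∈ range Q, eC (((r : ℝ) - s) * y) := by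
  unfold fejer
  push_cast
  rw [← Complex.mul_conj', map_sum, sum_mul_sum, div_eq_inv_mul]
  congr 1
  refine sum_congr rfl fun r _ => sum_congr rfl fun s _ => ?_
  rw [conj_eC, ← eC_add]
  congr 1; ring

/-- Orthogonality of the characters of `ℤ / Q`. -/
lemma sum_eC_grid {Q : ℕ} (hQ : 0 < Q) {k : ℤ} (hk : |k| < Q) :
    ∑ j ∈ range Q, eC (-(k * (j / Q : ℝ))) = if k = 0 then (Q : ℂ) else 0 := by
  split_ifs with h
  · simp [h, eC_zero]
  · have hQ' : (Q : ℝ) ≠ 0 := by positivity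
    have hw : ∀ j : ℕ, eC (-(k * (j / Q : ℝ))) = eC (-(k / Q : ℝ)) ^ j := fun j => by
      rw [← eC_nat_mul]; congr 1; ring
    simp_rw [hw]
    have h1 : eC (-(k / Q : ℝ)) ^ Q = 1 := by
      rw [← eC_nat_mul, show (Q : ℝ) * -(k / Q : ℝ) = ((-k : ℤ) : ℝ) by push_cast; field_simp, eC_int]
    have h2 : eC (-(k / Q : ℝ)) ≠ 1 := by
      intro he
      unfold eC at he
      rw [Complex.exp_eq_one_iff] at he
      obtain ⟨l, hl⟩ := he
      have h3 : (2 * Real.pi * Complex.I) * (((-(k / Q : ℝ)) : ℝ) : ℂ) =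
          (2 * Real.pi * Complex.I) * ((l : ℝ) : ℂ) := by rw [hl]; push_cast; ring
      have h4 := mul_left_cancel₀ Complex.two_pi_I_ne_zero h3
      have h5 : (-(k / Q : ℝ)) = l := by exact_mod_cast h4
      have h6 : (k : ℝ) = -l * Q := by rw [← h5]; field_simp
      have h7 : k = -l * Q := by exact_mod_cast h6
      have : (Q : ℤ) ∣ k := ⟨-l, by rw [h7]; ring⟩
      exact h (Int.eq_zero_of_abs_lt_dvd this hk)
    have := mul_geom_sum (eC (-(k / Q : ℝ))) Q
    rw [h1, sub_self] at this
    exact (mul_eq_zero.1 this).resolve_left (sub_ne_zero.2 h2)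

lemma abs_sub_lt_of_mem_range {Q r s : ℕ} (hr : r ∈ range Q) (hs : s ∈ range Q) :
    |(r : ℤ) - s| < Q := by
  rw [mem_range] at hr hs
  rw [abs_lt]; omega

/-- The translates of the kernel along the grid form a partition of unity. -/
lemma fejer_sum {Q : ℕ} (hQ : 0 < Q) (x : ℝ) : ∑ j ∈ range Q, fejer Q (x - j / Q) = 1 := by
  have hQ' : (Q : ℂ) ≠ 0 := by exact_mod_cast hQ.ne'
  have h : ((∑ j ∈ range Q, fejer Q (x - j / Q) : ℝ) : ℂ) = 1 := by
    push_cast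
    simp_rw [fejer_expand]
    rw [← mul_sum, sum_comm]
    have : ∀ r ∈ range Q, ∑ j ∈ range Q, ∑ s ∈ range Q, eC (((r : ℝ) - s) * (x - j / Q)) = Q := by
      intro r hr
      rw [sum_comm]
      have h2 : ∀ s ∈ range Q, ∑ j ∈ range Q, eC (((r : ℝ) - s) * (x - j / Q)) =
          if s = r then (Q : ℂ) else 0 := by
        intro s hs
        have h3 := sum_eC_grid hQ (abs_sub_lt_of_mem_range hr hs)
        have h4 : ∀ j : ℕ, eC (((r : ℝ) - s) * (x - j / Q)) =
            eC (((r : ℝ) - s) * x) * eC (-(((r : ℤ) - s : ℤ) * (j / Q : ℝ))) := fun j => by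
          rw [← eC_add]; congr 1; push_cast; ring
        simp_rw [h4]
        rw [← mul_sum, h3]
        by_cases hsr : s = r
        · subst hsr; simp [eC_zero]
        · have : (r : ℤ) - s ≠ 0 := by omega
          simp [hsr, this]
      rw [sum_congr rfl h2, sum_ite_eq' (range Q) r]
      simp [mem_range.1 hr]
    rw [sum_congr rfl this]
    simp only [sum_const, card_range, nsmul_eq_mul]
    field_simp
  exact_mod_cast h

lemma fejer_le {Q : ℕ} {η y : ℝ} (hη : 0 < η) (hy : η ≤ distT y) :
    fejer Q y ≤ 1 / (4 * η ^ 2 * (Q : ℝ) ^ 2) := by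
  have h1 := le_norm_eC_sub_one' y
  have h2 : ‖eC y - 1‖ * ‖∑ r ∈ range Q, eC (r * y)‖ ≤ 2 := by
    simp_rw [eC_nat_mul]
    rw [← norm_mul, mul_geom_sum]
    refine (norm_sub_le _ _).trans ?_
    rw [norm_pow, norm_eC]; norm_num
  set S := ‖∑ r ∈ range Q, eC (r * y)‖ with hS
  have hS0 : 0 ≤ S := norm_nonneg _
  have h3 : 2 * η * S ≤ 1 := by nlinarith
  have h4 : S ^ 2 ≤ 1 / (4 * η ^ 2) := by
    rw [le_div_iff₀ (by positivity)]
    have : 0 ≤ 2 * η * S := by positivity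
    nlinarith
  unfold fejer
  rw [← hS]
  calc S ^ 2 / (Q : ℝ) ^ 2 ≤ 1 / (4 * η ^ 2) / (Q : ℝ) ^ 2 := by gcongr
    _ = _ := by rw [div_div]

/-- For `Q = p ^ 3`, the kernel is negligible at distance `≥ 1 / p` from the integers. -/
lemma fejer_le_cube {p : ℕ} (hp : 0 < p) {y : ℝ} (hy : 1 / (p : ℝ) ≤ distT y) :
    ((p ^ 3 : ℕ) : ℝ) * fejer (p ^ 3) y ≤ 1 / (4 * p) := by
  have hp' : (0 : ℝ) < p := by exact_mod_cast hp
  have h := fejer_le (Q := p ^ 3) (by positivity) hy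
  calc ((p ^ 3 : ℕ) : ℝ) * fejer (p ^ 3) y
      ≤ ((p ^ 3 : ℕ) : ℝ) * (1 / (4 * (1 / (p : ℝ)) ^ 2 * ((p ^ 3 : ℕ) : ℝ) ^ 2)) := by gcongr
    _ = _ := by push_cast; field_simp

/-- The Fejér approximation of `x ↦ e(-ζ {x})`, a trigonometric polynomial of degree `< Q`. -/
def fejerApprox (Q : ℕ) (ζ x : ℝ) : ℂ :=
  ∑ j ∈ range Q, eC (-(ζ * (j / Q))) * (fejer Q (x - j / Q) : ℂ)

lemma norm_fejerApprox_le {Q : ℕ} (hQ : 0 < Q) (ζ x : ℝ) : ‖fejerApprox Q ζ x‖ ≤ 1 := by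
  rw [← fejer_sum hQ x]
  refine (norm_sum_le _ _).trans (sum_le_sum fun j _ => ?_)
  rw [norm_mul, norm_eC, one_mul, Complex.norm_real, Real.norm_eq_abs,
    abs_of_nonneg (fejer_nonneg _ _)]

/-- Away from the integers, where `x ↦ e(-ζ {x})` is continuous, the approximation is good. -/
lemma fejerApprox_close {p : ℕ} (hp : 0 < p) {ζ x : ℝ} (hζ : |ζ| ≤ 1 / 2)
    (hx : 1 / (p : ℝ) ≤ distT x) :
    ‖eC (-(ζ * Int.fract x)) - fejerApprox (p ^ 3) ζ x‖ ≤ 5 / p := by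
  have hp' : (0 : ℝ) < p := by exact_mod_cast hp
  set Q := p ^ 3 with hQd
  have hQ : 0 < Q := by positivity
  have hQ' : (0 : ℝ) < Q := by exact_mod_cast hQ
  -- `x` is at distance at least `1 / p` from both neighbouring integers
  have hlo : 1 / (p : ℝ) ≤ Int.fract x := by
    have := hx.trans (round_le x ⌊x⌋)
    rwa [Int.self_sub_floor, abs_of_nonneg (Int.fract_nonneg x)] at this
  have hhi : Int.fract x ≤ 1 - 1 / (p : ℝ) := by
    have := hx.trans (round_le x (⌊x⌋ + 1))
    have e : x - ((⌊x⌋ + 1 : ℤ) : ℝ) = Int.fract x - 1 := by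
      push_cast; rw [← Int.self_sub_floor]; ring
    rw [e, abs_of_nonpos (by linarith [Int.fract_lt_one x])] at this
    linarith
  have hsplit : eC (-(ζ * Int.fract x)) - fejerApprox Q ζ x =
      ∑ j ∈ range Q, (eC (-(ζ * Int.fract x)) - eC (-(ζ * (j / Q)))) *
        (fejer Q (x - j / Q) : ℂ) := by
    simp_rw [sub_mul]
    rw [sum_sub_distrib, ← mul_sum, ← Complex.ofReal_sum, fejer_sum hQ, Complex.ofReal_one, mul_one,
      fejerApprox]
  rw [hsplit]
  have hterm : ∀ j ∈ range Q, ‖(eC (-(ζ * Int.fract x)) - eC (-(ζ * (j / Q)))) *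
      (fejer Q (x - j / Q) : ℂ)‖ ≤ 4 / p * fejer Q (x - j / Q) + 1 / (2 * p) / Q := by
    intro j hj
    have hjQ : (j : ℝ) / Q < 1 := by
      rw [div_lt_one hQ']; exact_mod_cast mem_range.1 hj
    have hj0 : 0 ≤ (j : ℝ) / Q := by positivity
    have hK := fejer_nonneg Q (x - j / Q)
    rw [norm_mul, Complex.norm_real, Real.norm_eq_abs, abs_of_nonneg hK]
    rcases lt_or_ge |Int.fract x - j / Q| (1 / (p : ℝ)) with h | h
    · have h1 : ‖eC (-(ζ * Int.fract x)) - eC (-(ζ * (j / Q)))‖ ≤ 4 / p := by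
        refine (norm_eC_sub_eC_le _ _).trans ?_
        rw [show -(ζ * Int.fract x) - -(ζ * (j / Q : ℝ)) = -(ζ * (Int.fract x - j / Q)) by ring,
          abs_neg, abs_mul]
        calc 2 * Real.pi * (|ζ| * |Int.fract x - j / Q|) ≤ 2 * 4 * (1 / 2 * (1 / p)) := by
              gcongr; exact Real.pi_lt_four.le
          _ = 4 / p := by ring
      have h2 : 0 ≤ 1 / (2 * p) / (Q : ℝ) := by positivity
      have := mul_le_mul_of_nonneg_right h1 hK
      linarith
    · have h1 : 1 / (p : ℝ) ≤ distT (x - j / Q) := by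
        unfold distT
        set n := round (x - (j : ℝ) / Q)
        have e : x - (j : ℝ) / Q - n = Int.fract x - j / Q + ((⌊x⌋ - n : ℤ) : ℝ) := by
          push_cast; rw [← Int.self_sub_floor]; ring
        rw [e]
        rcases lt_trichotomy (⌊x⌋ - n) 0 with h0 | h0 | h0
        · have : ((⌊x⌋ - n : ℤ) : ℝ) ≤ -1 := by exact_mod_cast (by omega : ⌊x⌋ - n ≤ -1)
          rw [le_abs]; right; linarith
        · rw [h0]; simpa using h
        · have : (1 : ℝ) ≤ ((⌊x⌋ - n : ℤ) : ℝ) := by exact_mod_cast h0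
          rw [le_abs]; left; linarith
      have h2 := fejer_le_cube hp h1
      rw [← hQd] at h2
      have h3 : ‖eC (-(ζ * Int.fract x)) - eC (-(ζ * (j / Q)))‖ ≤ 2 := by
        refine (norm_sub_le _ _).trans ?_
        rw [norm_eC, norm_eC]; norm_num
      have h4 : 2 * fejer Q (x - j / Q) ≤ 1 / (2 * p) / Q := by
        rw [le_div_iff₀ hQ']
        calc 2 * fejer Q (x - j / Q) * Q = 2 * (Q * fejer Q (x - j / Q)) := by ring
          _ ≤ 2 * (1 / (4 * p)) := by gcongr
          _ = _ := by field_simp; norm_num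
      have h5 := mul_le_mul_of_nonneg_right h3 hK
      have h6 : 0 ≤ 4 / p * fejer Q (x - j / Q) := by positivity
      linarith
  refine (norm_sum_le_of_le _ hterm).trans ?_
  rw [sum_add_distrib, ← mul_sum, fejer_sum hQ, sum_const, card_range, nsmul_eq_mul]
  have : (Q : ℝ) * (1 / (2 * p) / Q) = 1 / 2 / p := by field_simp
  rw [this, mul_one, ← add_div]
  gcongr
  norm_num

/-- The grid points close to the integers. -/
def nearGrid (p : ℕ) : Finset ℕ :=
  (range (p ^ 3)).filter fun j => j < 2 * p ^ 2 ∨ p ^ 3 < j + 2 * p ^ 2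

lemma card_nearGrid_le (p : ℕ) : (nearGrid p).card ≤ 4 * p ^ 2 := by
  have h : nearGrid p ⊆ range (2 * p ^ 2) ∪ Finset.Ico (p ^ 3 - 2 * p ^ 2) (p ^ 3) := by
    intro j hj
    simp only [nearGrid, Finset.mem_filter, mem_range] at hj
    simp only [Finset.mem_union, mem_range, Finset.mem_Ico]
    omega
  refine (card_le_card h).trans ((card_union_le _ _).trans ?_)
  rw [card_range, Nat.card_Ico]
  omega

/-- Near the integers the kernel mass sits on the grid points close to the integers. -/
lemma one_le_sum_nearGrid {p : ℕ} (hp : 0 < p) {x : ℝ} (hx : distT x < 1 / p) :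
    1 ≤ 2 * ∑ j ∈ nearGrid p, fejer (p ^ 3) (x - j / (p ^ 3 : ℕ)) := by
  have hp' : (0 : ℝ) < p := by exact_mod_cast hp
  have hp1 : (1 : ℝ) ≤ p := by exact_mod_cast hp
  have h1 := fejer_sum (Q := p ^ 3) (by positivity) x
  rw [← sum_filter_add_sum_filter_not (range (p ^ 3))
    (fun j => j < 2 * p ^ 2 ∨ p ^ 3 < j + 2 * p ^ 2)] at h1
  change ∑ j ∈ nearGrid p, _ + _ = _ at h1
  have h2 : ∑ j ∈ (range (p ^ 3)).filter (fun j => ¬ (j < 2 * p ^ 2 ∨ p ^ 3 < j + 2 * p ^ 2)),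
      fejer (p ^ 3) (x - j / (p ^ 3 : ℕ)) ≤ 1 / 2 := by
    have hb : ∀ j ∈ (range (p ^ 3)).filter (fun j => ¬ (j < 2 * p ^ 2 ∨ p ^ 3 < j + 2 * p ^ 2)),
        fejer (p ^ 3) (x - j / (p ^ 3 : ℕ)) ≤ 1 / (4 * p) / (p ^ 3 : ℕ) := by
      intro j hj
      simp only [Finset.mem_filter, mem_range, not_or, not_lt] at hj
      obtain ⟨_, hj1, hj2⟩ := hj
      have hj1' : (2 : ℝ) * p ^ 2 ≤ j := by exact_mod_cast hj1
      have hj2' : (j : ℝ) + 2 * p ^ 2 ≤ p ^ 3 := by exact_mod_cast hj2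
      have g1 : 2 * (1 / p) ≤ (j : ℝ) / (p ^ 3 : ℕ) := by
        rw [le_div_iff₀ (by positivity)]; push_cast
        calc 2 * (1 / (p : ℝ)) * p ^ 3 = 2 * p ^ 2 := by field_simp
          _ ≤ _ := hj1'
      have g2 : (j : ℝ) / (p ^ 3 : ℕ) ≤ 1 - 2 * (1 / p) := by
        rw [div_le_iff₀ (by positivity)]; push_cast
        calc (j : ℝ) ≤ p ^ 3 - 2 * p ^ 2 := by linarith
          _ = _ := by field_simp
      have hd : 1 / (p : ℝ) ≤ distT (x - j / (p ^ 3 : ℕ)) := by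
        unfold distT at hx ⊢
        rw [abs_lt] at hx
        set n := round (x - (j : ℝ) / (p ^ 3 : ℕ))
        have e : x - (j : ℝ) / (p ^ 3 : ℕ) - n =
            (x - round x) - j / (p ^ 3 : ℕ) + ((round x - n : ℤ) : ℝ) := by push_cast; ring
        rw [e]
        rcases lt_or_ge (round x - n) 1 with h0 | h0
        · have : ((round x - n : ℤ) : ℝ) ≤ 0 := by exact_mod_cast (by omega : round x - n ≤ 0)
          rw [le_abs]; right; linarith [hx.1, hx.2]
        · have : (1 : ℝ) ≤ ((round x - n : ℤ) : ℝ) := by exact_mod_cast h0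
          rw [le_abs]; left; linarith [hx.1, hx.2]
      rw [le_div_iff₀ (by positivity), mul_comm]
      exact fejer_le_cube hp hd
    refine (sum_le_card_nsmul _ _ _ hb).trans ?_
    have hc : ((((range (p ^ 3)).filter
        (fun j => ¬ (j < 2 * p ^ 2 ∨ p ^ 3 < j + 2 * p ^ 2))).card : ℕ) : ℝ) ≤ (p ^ 3 : ℕ) := by
      exact_mod_cast (card_filter_le _ _).trans (card_range _).le
    rw [nsmul_eq_mul]
    calc _ ≤ ((p ^ 3 : ℕ) : ℝ) * (1 / (4 * p) / (p ^ 3 : ℕ)) := by gcongr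
      _ = 1 / (4 * p) := by field_simp
      _ ≤ 1 / 2 := by rw [div_le_div_iff₀ (by positivity) (by norm_num)]; linarith
  linarith

/-! ### Counting points close to the integers -/

lemma sum_fejer_le {Q N : ℕ} (hQ : 0 < Q) (I : Finset ℕ) (hI : I.card ≤ N) (x : ℕ → ℝ)
    (hW : ∀ k : ℤ, k ≠ 0 → |k| < Q → ‖∑ n ∈ I, eC (k * x n)‖ ≤ (N : ℝ) / Q) (t : ℝ) :
    ∑ n ∈ I, fejer Q (x n - t) ≤ 2 * N / Q := by
  have hQ' : (0 : ℝ) < Q := by exact_mod_cast hQ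
  have hI' : (I.card : ℝ) ≤ N := by exact_mod_cast hI
  have h0 : 0 ≤ ∑ n ∈ I, fejer Q (x n - t) := sum_nonneg fun _ _ => fejer_nonneg _ _
  have h1 : ((∑ n ∈ I, fejer Q (x n - t) : ℝ) : ℂ) = ((Q : ℂ) ^ 2)⁻¹ * ∑ r ∈ range Q,
      ∑ s ∈ range Q, eC (-(((r : ℝ) - s) * t)) * ∑ n ∈ I, eC (((r : ℤ) - s : ℤ) * x n) := by
    push_cast
    simp_rw [fejer_expand]
    rw [← mul_sum, sum_comm]
    congr 1
    refine sum_congr rfl fun r _ => ?_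
    rw [sum_comm]
    refine sum_congr rfl fun s _ => ?_
    rw [mul_sum]
    refine sum_congr rfl fun n _ => ?_
    rw [← eC_add]; congr 1; ring
  have h2 : ∀ r ∈ range Q, ∀ s ∈ range Q,
      ‖eC (-(((r : ℝ) - s) * t)) * ∑ n ∈ I, eC (((r : ℤ) - s : ℤ) * x n)‖ ≤
        (if s = r then (N : ℝ) else 0) + N / Q := by
    intro r hr s hs
    rw [norm_mul, norm_eC, one_mul]
    split_ifs with h
    · refine (norm_sum_le _ _).trans ?_
      simp only [norm_eC, sum_const, nsmul_eq_mul, mul_one]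
      have : 0 ≤ (N : ℝ) / Q := by positivity
      linarith
    · rw [zero_add]
      exact hW _ (by omega) (abs_sub_lt_of_mem_range hr hs)
  rw [← abs_of_nonneg h0, ← Real.norm_eq_abs, ← Complex.norm_real, h1, norm_mul, norm_inv, norm_pow,
    Complex.norm_natCast]
  calc ((Q : ℝ) ^ 2)⁻¹ * ‖_‖ ≤ ((Q : ℝ) ^ 2)⁻¹ * ∑ r ∈ range Q, ∑ s ∈ range Q,
        ((if s = r then (N : ℝ) else 0) + N / Q) := by
        gcongr
        refine norm_sum_le_of_le _ fun r hr => norm_sum_le_of_le _ fun s hs => h2 r hr s hs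
    _ = ((Q : ℝ) ^ 2)⁻¹ * ∑ r ∈ range Q, ((N : ℝ) + N) := by
        congr 1
        refine sum_congr rfl fun r hr => ?_
        rw [sum_add_distrib, sum_ite_eq' (range Q) r, if_pos hr, sum_const, card_range,
          nsmul_eq_mul]
        field_simp
    _ = _ := by
        rw [sum_const, card_range, nsmul_eq_mul]; field_simp; ring

lemma card_near_le {p N : ℕ} (hp : 0 < p) (I : Finset ℕ) (hI : I.card ≤ N) (x : ℕ → ℝ)
    (hW : ∀ k : ℤ, k ≠ 0 → |k| < (p ^ 3 : ℕ) →
      ‖∑ n ∈ I, eC (k * x n)‖ ≤ (N : ℝ) / (p ^ 3 : ℕ)) :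
    ((I.filter fun n => distT (x n) < 1 / p).card : ℝ) ≤ 16 * N / p := by
  have hp' : (0 : ℝ) < p := by exact_mod_cast hp
  calc ((I.filter fun n => distT (x n) < 1 / p).card : ℝ)
      = ∑ n ∈ I.filter (fun n => distT (x n) < 1 / p), (1 : ℝ) := by simp
    _ ≤ ∑ n ∈ I.filter (fun n => distT (x n) < 1 / p),
        2 * ∑ j ∈ nearGrid p, fejer (p ^ 3) (x n - j / (p ^ 3 : ℕ)) :=
        sum_le_sum fun n hn => one_le_sum_nearGrid hp (Finset.mem_filter.1 hn).2
    _ ≤ ∑ n ∈ I, 2 * ∑ j ∈ nearGrid p, fejer (p ^ 3) (x n - j / (p ^ 3 : ℕ)) :=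
        sum_le_sum_of_subset_of_nonneg (filter_subset _ _) fun n _ _ =>
          mul_nonneg (by norm_num) (sum_nonneg fun j _ => fejer_nonneg _ _)
    _ = 2 * ∑ j ∈ nearGrid p, ∑ n ∈ I, fejer (p ^ 3) (x n - j / (p ^ 3 : ℕ)) := by
        rw [← mul_sum, sum_comm]
    _ ≤ 2 * ∑ j ∈ nearGrid p, 2 * N / ((p ^ 3 : ℕ) : ℝ) := by
        gcongr with j hj
        exact sum_fejer_le (by positivity) I hI x hW _
    _ ≤ 2 * (((4 * p ^ 2 : ℕ) : ℝ) * (2 * N / ((p ^ 3 : ℕ) : ℝ))) := by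
        rw [sum_const, nsmul_eq_mul]
        gcongr
        exact card_nearGrid_le p
    _ = _ := by push_cast; field_simp; ring

/-! ### Removing the integer parts -/

lemma norm_prod_sub_prod_le_sum {ι : Type*} (s : Finset ι) (f g : ι → ℂ) (hf : ∀ i, ‖f i‖ ≤ 1)
    (hg : ∀ i, ‖g i‖ ≤ 1) : ‖∏ i ∈ s, f i - ∏ i ∈ s, g i‖ ≤ ∑ i ∈ s, ‖f i - g i‖ := by
  classical
  induction s using Finset.induction_on with
  | empty => simp
  | insert a s ha ih =>
    rw [prod_insert ha, prod_insert ha, sum_insert ha]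
    have e : f a * ∏ i ∈ s, f i - g a * ∏ i ∈ s, g i =
        (f a - g a) * ∏ i ∈ s, f i + g a * (∏ i ∈ s, f i - ∏ i ∈ s, g i) := by ring
    have h1 : ‖∏ i ∈ s, f i‖ ≤ 1 := by
      rw [norm_prod]; exact prod_le_one (fun _ _ => norm_nonneg _) fun i _ => hf i
    rw [e]
    refine (norm_add_le _ _).trans ?_
    rw [norm_mul, norm_mul]
    have h2 := mul_le_mul_of_nonneg_left h1 (norm_nonneg (f a - g a))
    have h3 := mul_le_mul_of_nonneg_right (hg a) (norm_nonneg (∏ i ∈ s, f i - ∏ i ∈ s, g i))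
    linarith

lemma eC_mul_floor (ζ x : ℝ) : eC (ζ * ⌊x⌋) = eC (ζ * x) * eC (-(ζ * Int.fract x)) := by
  rw [← eC_add]; congr 1; rw [← Int.self_sub_fract]; ring

lemma fejerApprox_expand (Q : ℕ) (ζ x : ℝ) :
    eC (ζ * x) * fejerApprox Q ζ x = ∑ τ ∈ range Q ×ˢ range Q ×ˢ range Q,
      (((Q : ℂ) ^ 2)⁻¹ * eC (-((ζ + (τ.2.1 - τ.2.2)) * (τ.1 / Q)))) *
        eC ((ζ + (((τ.2.1 : ℤ) - τ.2.2 : ℤ) : ℝ)) * x) := by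
  rw [sum_product, fejerApprox, mul_sum]
  refine sum_congr rfl fun j _ => ?_
  rw [sum_product, fejer_expand, mul_sum, mul_sum, mul_sum]
  refine sum_congr rfl fun r _ => ?_
  rw [mul_sum, mul_sum, mul_sum]
  refine sum_congr rfl fun s _ => ?_
  have : eC (ζ * x) * (eC (-(ζ * (j / Q))) * (((Q : ℂ) ^ 2)⁻¹ * eC (((r : ℝ) - s) * (x - j / Q)))) =
      ((Q : ℂ) ^ 2)⁻¹ * (eC (ζ * x) * eC (-(ζ * (j / Q))) * eC (((r : ℝ) - s) * (x - j / Q))) := by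
    ring
  rw [this, mul_assoc (((Q : ℂ) ^ 2)⁻¹), ← eC_add, ← eC_add, ← eC_add]
  congr 2; push_cast; ring

/-- A sum of products of approximations is controlled by the sums without integer parts whose
frequencies are integer translates of the given ones. -/
lemma norm_sum_prod_fejerApprox_le {m Q : ℕ} (hQ : 0 < Q) (I : Finset ℕ) (x : Fin m → ℕ → ℝ)
    (ζ : Fin m → ℝ) {Y : ℝ} (hY : ∀ k : Fin m → ℤ, (∀ i, |k i| < Q) →
      ‖∑ n ∈ I, eC (∑ i, (ζ i + k i) * x i n)‖ ≤ Y) :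
    ‖∑ n ∈ I, ∏ i, (eC (ζ i * x i n) * fejerApprox Q (ζ i) (x i n))‖ ≤ (Q : ℝ) ^ m * Y := by
  classical
  have hQ' : (0 : ℝ) < Q := by exact_mod_cast hQ
  simp_rw [fejerApprox_expand]
  simp_rw [prod_univ_sum]
  rw [sum_comm]
  have hterm : ∀ τ ∈ Fintype.piFinset fun _ : Fin m => range Q ×ˢ range Q ×ˢ range Q,
      ‖∑ n ∈ I, ∏ i, (((Q : ℂ) ^ 2)⁻¹ *
        eC (-((ζ i + (((τ i).2.1 : ℝ) - (τ i).2.2)) * ((τ i).1 / Q)))) *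
        eC ((ζ i + ((((τ i).2.1 : ℤ) - (τ i).2.2 : ℤ) : ℝ)) * x i n)‖ ≤
      (((Q : ℝ) ^ 2)⁻¹) ^ m * Y := by
    intro τ hτ
    simp_rw [prod_mul_distrib, ← eC_sum]
    rw [← mul_sum, norm_mul, norm_mul, norm_eC, mul_one, prod_const, card_univ, Fintype.card_fin,
      norm_pow, norm_inv, norm_pow, Complex.norm_natCast]
    gcongr
    refine hY (fun i => ((τ i).2.1 : ℤ) - (τ i).2.2) fun i => ?_
    have := Fintype.mem_piFinset.1 hτ i
    rw [Finset.mem_product, Finset.mem_product] at this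
    exact abs_sub_lt_of_mem_range this.2.1 this.2.2
  refine (norm_sum_le_of_le _ hterm).trans (le_of_eq ?_)
  rw [sum_const, Fintype.card_piFinset, nsmul_eq_mul]
  simp only [card_product, card_range, prod_const, card_univ, Fintype.card_fin]
  push_cast
  rw [← mul_assoc, ← mul_pow]
  congr 2
  field_simp

/-- The sum with integer parts is bounded by the sums without, provided each sequence `x i` is
equidistributed modulo one at scale `1 / p`. -/
lemma floor_removal {m p N : ℕ} (hp : 0 < p) (I : Finset ℕ) (hI : I.card ≤ N)
    (x : Fin m → ℕ → ℝ) (ζ : Fin m → ℝ) (hζ : ∀ i, |ζ i| ≤ 1 / 2)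
    (hW : ∀ i, ∀ k : ℤ, k ≠ 0 → |k| < (p ^ 3 : ℕ) →
      ‖∑ n ∈ I, eC (k * x i n)‖ ≤ (N : ℝ) / (p ^ 3 : ℕ))
    {Y : ℝ} (hY : ∀ k : Fin m → ℤ, (∀ i, |k i| < (p ^ 3 : ℕ)) →
      ‖∑ n ∈ I, eC (∑ i, (ζ i + k i) * x i n)‖ ≤ Y) :
    ‖∑ n ∈ I, eC (∑ i, ζ i * (⌊x i n⌋ : ℝ))‖ ≤ 37 * m * N / p + ((p ^ 3 : ℕ) : ℝ) ^ m * Y := by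
  have hp' : (0 : ℝ) < p := by exact_mod_cast hp
  have hQ : 0 < p ^ 3 := by positivity
  have hI' : (I.card : ℝ) ≤ N := by exact_mod_cast hI
  have hmain := norm_sum_prod_fejerApprox_le hQ I x ζ hY
  have hpt : ∀ n i, ‖eC (ζ i * ⌊x i n⌋) - eC (ζ i * x i n) * fejerApprox (p ^ 3) (ζ i) (x i n)‖ ≤
      5 / p + if distT (x i n) < 1 / p then 2 else 0 := by
    intro n i
    rw [eC_mul_floor, ← mul_sub, norm_mul, norm_eC, one_mul]
    split_ifs with h
    · have h1 := norm_sub_le (eC (-(ζ i * Int.fract (x i n)))) (fejerApprox (p ^ 3) (ζ i) (x i n))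
      rw [norm_eC] at h1
      have h2 := norm_fejerApprox_le hQ (ζ i) (x i n)
      have h3 : 0 ≤ 5 / (p : ℝ) := by positivity
      linarith
    · rw [add_zero]
      exact fejerApprox_close hp (hζ i) (not_lt.1 h)
  have herr : ‖∑ n ∈ I, eC (∑ i, ζ i * (⌊x i n⌋ : ℝ)) -
      ∑ n ∈ I, ∏ i, (eC (ζ i * x i n) * fejerApprox (p ^ 3) (ζ i) (x i n))‖ ≤ 37 * m * N / p := by
    rw [← sum_sub_distrib]
    calc _ ≤ ∑ n ∈ I, ∑ i, (5 / (p : ℝ) + if distT (x i n) < 1 / p then 2 else 0) := by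
          refine norm_sum_le_of_le _ fun n _ => ?_
          rw [eC_sum]
          refine (norm_prod_sub_prod_le_sum _ _ _ (fun i => (norm_eC _).le) fun i => ?_).trans
            (sum_le_sum fun i _ => hpt n i)
          rw [norm_mul, norm_eC, one_mul]
          exact norm_fejerApprox_le hQ _ _
      _ = ∑ i, ∑ n ∈ I, (5 / (p : ℝ) + if distT (x i n) < 1 / p then 2 else 0) := sum_comm
      _ ≤ ∑ i : Fin m, (N * (5 / (p : ℝ)) + 16 * N / p * 2) := by
          refine sum_le_sum fun i _ => ?_
          rw [sum_add_distrib, sum_const, nsmul_eq_mul, ← sum_filter, sum_const, nsmul_eq_mul]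
          gcongr
          exact card_near_le hp I hI (x i) (hW i)
      _ = _ := by
          rw [sum_const, card_univ, Fintype.card_fin, nsmul_eq_mul]; ring
  have := norm_le_norm_add_norm_sub
    (∑ n ∈ I, ∏ i, (eC (ζ i * x i n) * fejerApprox (p ^ 3) (ζ i) (x i n)))
    (∑ n ∈ I, eC (∑ i, ζ i * (⌊x i n⌋ : ℝ)))
  rw [norm_sub_rev] at this
  linarith

/-! ### The inverse theorem for the sums with integer parts -/

lemma le_phaseSize {m : ℕ} (c θ : Fin m → ℝ) {N : ℝ} (hN : 0 ≤ N) (i : Fin m) :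
    |θ i| * N ^ c i ≤ phaseSize c θ N :=
  single_le_sum (f := fun i => |θ i| * N ^ c i) (fun _ _ => by positivity) (mem_univ i)

lemma norm_mZ_eq {m : ℕ} (c : Fin m → ℝ) {N : ℕ} (hN : 1 ≤ N) (ξ : Fin m → ℝ) :
    (N : ℝ) * ‖mZ m c N ξ‖ = ‖∑ n ∈ Finset.Ioc (N / 2) N,
      eC (∑ i, (ξ i - round (ξ i)) * (⌊(n : ℝ) ^ c i⌋ : ℝ))‖ := by
  have hN' : (0 : ℝ) < N := by exact_mod_cast hN
  unfold mZ
  rw [norm_mul, norm_inv, Complex.norm_natCast, ← mul_assoc, mul_inv_cancel₀ hN'.ne', one_mul,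
    ← sum_filter]
  have hset : (Finset.Icc 1 N).filter (fun n => N < 2 * n) = Finset.Ioc (N / 2) N := by
    ext n; simp only [Finset.mem_filter, Finset.mem_Icc, Finset.mem_Ioc]; omega
  rw [hset]
  congr 1
  refine sum_congr rfl fun n _ => ?_
  rw [eC_sum, eC_sum]
  refine prod_congr rfl fun i _ => ?_
  have e : ξ i * (⌊(n : ℝ) ^ c i⌋ : ℝ) = (ξ i - round (ξ i)) * (⌊(n : ℝ) ^ c i⌋ : ℝ) +
      ((round (ξ i) * ⌊(n : ℝ) ^ c i⌋ : ℤ) : ℝ) := by push_cast; ring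
  rw [e, eC_add, eC_int, mul_one]

/-- The inverse theorem with the parameter `δ` replaced by an integer `p ≥ 148 m / δ`. -/
lemma inverse_nat {m : ℕ} (hm : 0 < m) (c : Fin m → ℝ) (hc : Function.Injective c)
    (hpos : ∀ i, 0 < c i) (hint : ∀ i, ∀ k : ℤ, c i ≠ (k : ℝ)) :
    ∃ E : ℕ, ∀ N : ℕ, 1 ≤ N → ∀ δ : ℝ, 0 < δ → δ ≤ 1 → ∀ p : ℕ, 148 * m / δ ≤ p →
      ∀ ξ : Fin m → ℝ, δ ≤ ‖mZ m c N ξ‖ →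
      (N : ℝ) ≤ (p : ℝ) ^ E ∨ (∃ i, (N : ℝ) ^ c i ≤ (p : ℝ) ^ E) ∨
        ∀ i, distT (ξ i) * (N : ℝ) ^ c i ≤ (p : ℝ) ^ E := by
  obtain ⟨C, hC⟩ := smooth_inverse hm c hc hpos hint
  refine ⟨(3 * m + 1) * C, fun N hN δ hδ hδ1 p hp ξ hξ => ?_⟩
  have hN' : (0 : ℝ) < N := by exact_mod_cast hN
  have hm' : (1 : ℝ) ≤ m := by exact_mod_cast hm
  have hpδ : 148 * m ≤ p * δ := by rwa [div_le_iff₀ hδ] at hp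
  have hp2' : (2 : ℝ) ≤ p := by
    have h0 : (0 : ℝ) ≤ p := Nat.cast_nonneg p
    nlinarith
  have hp2 : 2 ≤ p := by exact_mod_cast hp2'
  have hp0 : (0 : ℝ) < p := by linarith
  set A := p ^ (3 * m + 1) with hA
  have hA2 : 2 ≤ A := hp2.trans (Nat.le_self_pow (by omega) p)
  have hQA : p ^ 3 + 1 ≤ A := by
    have h1 : p ^ 4 ≤ A := Nat.pow_le_pow_right (by omega) (by omega)
    have h2 : 1 ≤ p ^ 3 := Nat.one_le_pow _ _ (by omega)
    have h3 : p ^ 4 = p ^ 3 * p := by ring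
    nlinarith
  have hQA' : ((p ^ 3 : ℕ) : ℝ) + 1 ≤ A := by exact_mod_cast hQA
  have hQ0 : (0 : ℝ) < (p ^ 3 : ℕ) := by positivity
  have hpE : (p : ℝ) ^ ((3 * m + 1) * C) = (A : ℝ) ^ C := by rw [hA]; push_cast; rw [pow_mul]
  rw [hpE]
  by_contra! hcon
  obtain ⟨hc1, hc2, i₀, hc3⟩ := hcon
  set ζ : Fin m → ℝ := fun i => ξ i - round (ξ i) with hζ
  have hζ2 : ∀ i, |ζ i| ≤ 1 / 2 := fun i => abs_sub_round (ξ i)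
  have hcard : (Finset.Ioc (N / 2) N).card ≤ N := by rw [Nat.card_Ioc]; omega
  have habs : ∀ k : ℤ, |k| < (p ^ 3 : ℕ) → |(k : ℝ)| ≤ (p ^ 3 : ℕ) := fun k hk => by
    exact_mod_cast hk.le
  -- equidistribution of each sequence `n ^ c i` modulo one
  have hW : ∀ i, ∀ k : ℤ, k ≠ 0 → |k| < (p ^ 3 : ℕ) →
      ‖∑ n ∈ Finset.Ioc (N / 2) N, eC (k * (n : ℝ) ^ c i)‖ ≤ (N : ℝ) / (p ^ 3 : ℕ) := by
    intro i k hk0 hk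
    by_contra! hlt
    have hsum : ∀ n : ℕ, ∑ l, (Pi.single i (k : ℝ) : Fin m → ℝ) l * (n : ℝ) ^ c l =
        k * (n : ℝ) ^ c i := fun n => by
      rw [sum_eq_single i (fun l _ hl => by rw [Pi.single_eq_of_ne hl, zero_mul]) (by simp),
        Pi.single_eq_same]
    have h := hC N hN A hA2 (Pi.single i (k : ℝ)) (fun l => by
        by_cases hl : l = i
        · subst hl; rw [Pi.single_eq_same]; linarith [habs k hk]
        · rw [Pi.single_eq_of_ne hl, abs_zero]; positivity)
      (by
        simp_rw [hsum]
        refine le_trans ?_ hlt.le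
        gcongr
        linarith)
    rcases h with h | h
    · exact absurd h (not_le.2 hc1)
    · have h1 := (le_phaseSize c (Pi.single i (k : ℝ)) hN'.le i).trans h
      rw [Pi.single_eq_same] at h1
      have h2 : (1 : ℝ) ≤ |(k : ℝ)| := by exact_mod_cast Int.one_le_abs hk0
      have h3 : 0 < (N : ℝ) ^ c i := by positivity
      have := hc2 i
      nlinarith
  have hY : ∀ k : Fin m → ℤ, (∀ i, |k i| < (p ^ 3 : ℕ)) →
      ‖∑ n ∈ Finset.Ioc (N / 2) N, eC (∑ i, (ζ i + k i) * (n : ℝ) ^ c i)‖ ≤ (N : ℝ) / A := by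
    intro k hk
    by_contra! hlt
    rcases hC N hN A hA2 (fun i => ζ i + k i) (fun i => by
        have := abs_add_le (ζ i) (k i)
        linarith [habs _ (hk i), hζ2 i]) hlt.le with h | h
    · exact absurd h (not_le.2 hc1)
    · have h1 := (le_phaseSize c (fun i => ζ i + k i) hN'.le i₀).trans h
      have h2 : distT (ξ i₀) ≤ |ζ i₀ + k i₀| := by
        refine (round_le (ξ i₀) (round (ξ i₀) - k i₀)).trans (le_of_eq ?_)
        congr 1; rw [hζ]; push_cast; ring
      have h3 : 0 < (N : ℝ) ^ c i₀ := by positivity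
      have h4 := mul_le_mul_of_nonneg_right h2 h3.le
      exact absurd (h4.trans h1) (not_le.2 hc3)
  have hfin := floor_removal (by omega : 0 < p) (Finset.Ioc (N / 2) N) hcard
    (fun i n => (n : ℝ) ^ c i) ζ hζ2 hW hY
  rw [← norm_mZ_eq c hN ξ] at hfin
  have e1 : ((p ^ 3 : ℕ) : ℝ) ^ m * ((N : ℝ) / A) = N * (1 / p) := by
    rw [hA]; push_cast; rw [← pow_mul, pow_succ]; field_simp
  have e2 : 37 * m * (N : ℝ) / p = N * (37 * m / p) := by ring
  rw [e1, e2, ← mul_add] at hfin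
  have h5 := hξ.trans (le_of_mul_le_mul_left hfin hN')
  rw [← add_div, le_div_iff₀ hp0] at h5
  linarith

/-- inverse theorem for the exponential sum, Lemma 4.1 of
the paper: for non-integer `0 < c₁ < ⋯ < c_m` there is `C > 0` such that for
every `N ≥ 1`, `δ ∈ (0,1]` and `ξ₁,…,ξ_m ∈ ℝ`, if
`δ ≤ |m_{N;ℤ}(ξ₁,…,ξ_m)|` then either `N ≤ C δ^{−C}` or
`‖ξ_i‖_𝕋 ≤ C δ^{−C} N^{−c_i}` for every `i`. -/
theorem stmt9 {m : ℕ} (hm : 0 < m) (c : Fin m → ℝ)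
    (hpos : ∀ i, 0 < c i) (hmono : StrictMono c)
    (hint : ∀ i, ∀ k : ℤ, c i ≠ (k : ℝ)) :
    ∃ C : ℝ, 0 < C ∧ ∀ N : ℕ, 1 ≤ N → ∀ δ : ℝ, 0 < δ → δ ≤ 1 →
      ∀ ξ : Fin m → ℝ, δ ≤ ‖mZ m c N ξ‖ →
        (N : ℝ) ≤ C * δ ^ (-C) ∨
          ∀ i, distT (ξ i) ≤ C * δ ^ (-C) * (N : ℝ) ^ (-(c i)) := by
  obtain ⟨E, hE⟩ := inverse_nat hm c hmono.injective hpos hint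
  have hm' : (1 : ℝ) ≤ m := by exact_mod_cast hm
  set V : ℝ := 149 * m with hV
  have hV1 : 1 ≤ V := by linarith
  -- `F` dominates both `E` and every `E / c i`
  set F : ℝ := E + ∑ i, E / c i with hF
  have hterm : ∀ i, 0 ≤ (E : ℝ) / c i := fun i => div_nonneg (Nat.cast_nonneg _) (hpos i).le
  have hsum0 : 0 ≤ ∑ i, (E : ℝ) / c i := sum_nonneg fun i _ => hterm i
  have hE0 : (0 : ℝ) ≤ E := Nat.cast_nonneg _
  have hF0 : 0 ≤ F := by positivity
  have hVF : 0 < V ^ F := by positivity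
  refine ⟨V ^ F + F, by positivity, fun N hN δ hδ hδ1 ξ hξ => ?_⟩
  have hN' : (0 : ℝ) < N := by exact_mod_cast hN
  obtain ⟨p, hp1, hp2⟩ : ∃ p : ℕ, 148 * m / δ ≤ p ∧ (p : ℝ) ≤ V / δ := by
    refine ⟨⌈148 * m / δ⌉₊, Nat.le_ceil _, (Nat.ceil_lt_add_one (by positivity)).le.trans ?_⟩
    rw [div_add_one hδ.ne']
    gcongr
    linarith
  have hp0 : (0 : ℝ) ≤ p := Nat.cast_nonneg _
  have hVδ : 1 ≤ V / δ := by rw [le_div_iff₀ hδ]; linarith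
  have key : ∀ s : ℝ, 0 ≤ s → s ≤ F → (p : ℝ) ^ s ≤ (V ^ F + F) * δ ^ (-(V ^ F + F)) := by
    intro s hs hsF
    calc (p : ℝ) ^ s ≤ (V / δ) ^ s := Real.rpow_le_rpow hp0 hp2 hs
      _ ≤ (V / δ) ^ F := Real.rpow_le_rpow_of_exponent_le hVδ hsF
      _ = V ^ F * δ ^ (-F) := by
          rw [Real.div_rpow (by linarith) hδ.le, Real.rpow_neg hδ.le, div_eq_mul_inv]
      _ ≤ (V ^ F + F) * δ ^ (-(V ^ F + F)) := by
          have : δ ^ (-F) ≤ δ ^ (-(V ^ F + F)) :=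
            Real.rpow_le_rpow_of_exponent_ge hδ hδ1 (by linarith)
          gcongr
          linarith
  have keyE : (p : ℝ) ^ E ≤ (V ^ F + F) * δ ^ (-(V ^ F + F)) := by
    rw [← Real.rpow_natCast]
    exact key E hE0 (by linarith)
  rcases hE N hN δ hδ hδ1 p hp1 ξ hξ with h | ⟨i, h⟩ | h
  · exact Or.inl (h.trans keyE)
  · refine Or.inl (le_trans ?_ (key (E / c i) (hterm i) ?_))
    · rw [← Real.rpow_natCast] at h
      have h2 := Real.rpow_le_rpow (by positivity) h (inv_nonneg.2 (hpos i).le)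
      rwa [Real.rpow_rpow_inv hN'.le (hpos i).ne', ← Real.rpow_mul hp0, ← div_eq_mul_inv] at h2
    · have := single_le_sum (f := fun i => (E : ℝ) / c i) (fun i _ => hterm i) (mem_univ i)
      linarith
  · refine Or.inr fun i => ?_
    rw [Real.rpow_neg hN'.le, ← div_eq_mul_inv, le_div_iff₀ (by positivity)]
    exact (h i).trans keyE

end
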